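/- Let F be a field of characteristic 2, let n ≥ 1, let π be an n-fold quadratic Pfister form over F, and let K be a purely inseparable extension of F of exponent 1 (K² ⊆ F). Let L = K(π) be the function field over K of the projective quadric defined by π = 0. Then W_q(L/F) = W_q(K/F) + W(F) ⊗ π. -/

import Mathlib

/-!  A concrete coefficient-matrix model of (possibly singular) finite-dimensional
quadratic forms over a field, suitable for characteristic 2. -/

/-- Coefficient representation of a (finite-dimensional) quadratic form over a field `F`:
the form of dimension `dim` given by `q(x) = ∑ i j, c i j * x i * x j`. -/
structure QF (F : Type*) [Field F] : Type _ where
  dim : ℕ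
  c : Matrix (Fin dim) (Fin dim) F

namespace QF

variable {F E : Type*} [Field F] [Field E]

/-- Evaluation of the quadratic form at a vector. -/
def eval (q : QF F) (x : Fin q.dim → F) : F :=
  ∑ i, ∑ j, q.c i j * x i * x j

/-- Scalar extension (base change) of a quadratic form along a ring homomorphism. -/
def map (f : F →+* E) (q : QF F) : QF E :=
  ⟨q.dim, fun i j => f (q.c i j)⟩

/-- Orthogonal sum. -/
def orthSum (q q' : QF F) : QF F :=
  ⟨q.dim + q'.dim,
    Matrix.reindex finSumFinEquiv finSumFinEquiv (Matrix.fromBlocks q.c 0 0 q'.c)⟩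

/-- Scaling `a • q`. -/
def smul (a : F) (q : QF F) : QF F := ⟨q.dim, a • q.c⟩

/-- The nonsingular binary quadratic form `[a,b] : (x,y) ↦ ax² + xy + by²`. -/
def bin (a b : F) : QF F := ⟨2, !![a, 1; 0, b]⟩

/-- The diagonal (totally singular) quadratic form `⟨a₁, …, aₙ⟩`. -/
def diag {n : ℕ} (v : Fin n → F) : QF F := ⟨n, Matrix.diagonal v⟩

/-- The zero-dimensional quadratic form. -/
def nil : QF F := { dim := 0, c := 0 }

/-- The one-dimensional form `⟨1⟩`. -/
def unit : QF F := diag (fun _ : Fin 1 => (1 : F))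

/-- Orthogonal sum of a list of forms. -/
def sumList (l : List (QF F)) : QF F := l.foldr orthSum nil

/-- `pfTensor [a₁,…,aₙ] q` is the tensor product `⟨⟨a₁,…,aₙ⟩⟩_b ⊗ q` of the bilinear
Pfister form `⟨⟨a₁,…,aₙ⟩⟩_b = ⟨1,a₁⟩_b ⊗ ⋯ ⊗ ⟨1,aₙ⟩_b` with the quadratic form `q`,
via `⟨1,a⟩_b ⊗ q ≅ q ⊥ a·q`. -/
def pfTensor (l : List F) (q : QF F) : QF F :=
  l.foldr (fun a r => orthSum r (smul a r)) q

/-- The hyperbolic plane `ℍ ≅ [0,0]`. -/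
def hypPlane : QF F := bin 0 0

/-- The orthogonal sum of `k` hyperbolic planes. -/
def hyp (k : ℕ) : QF F := sumList (List.replicate k hypPlane)

/-- The `l`-dimensional zero form `⟨0,…,0⟩`. -/
def zeros (l : ℕ) : QF F := diag (fun _ : Fin l => (0 : F))

/-- Isometry of quadratic forms. -/
def Isometric (q q' : QF F) : Prop :=
  ∃ e : (Fin q.dim → F) ≃ₗ[F] (Fin q'.dim → F), ∀ x, q'.eval (e x) = q.eval x

/-- Anisotropy: the form has no nontrivial zero. -/
def Anisotropic (q : QF F) : Prop := ∀ x, q.eval x = 0 → x = 0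

/-- A quadratic form is nonsingular if the radical of its polar form
`B_q(x,y) = q(x+y) - q(x) - q(y)` (with matrix `c + cᵀ`) is trivial. -/
def Nonsingular (q : QF F) : Prop := ∀ x, (q.c + q.c.transpose).mulVec x = 0 → x = 0

/-- A quadratic form is totally singular if its polar form vanishes identically. -/
def TotallySingular (q : QF F) : Prop := q.c + q.c.transpose = 0

/-- A quadratic form is hyperbolic if it is isometric to an orthogonal sum of
hyperbolic planes. -/
def Hyperbolic (q : QF F) : Prop := ∃ k, Isometric q (hyp k)

/-- Witt equivalence: `q ~ q'` iff the anisotropic parts agree, equivalently the two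
forms become isometric after adding suitable numbers of hyperbolic planes and zero
forms. -/
def WittEquiv (q q' : QF F) : Prop :=
  ∃ k k' l l', Isometric (orthSum q (orthSum (hyp k) (zeros l)))
    (orthSum q' (orthSum (hyp k') (zeros l')))

/-- `AnisoPartOf φ q` : `φ` is (isometric to) the anisotropic part of `q`, i.e. `φ` is
anisotropic and `q ≅ k × ℍ ⊥ φ ⊥ ⟨0,…,0⟩`. -/
def AnisoPartOf (φ q : QF F) : Prop :=
  Anisotropic φ ∧ ∃ k l, Isometric q (orthSum (hyp k) (orthSum φ (zeros l)))

/-- `Dominates q' q` means `q ≺ q'`, i.e. `q'` dominates `q`: there is an injective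
linear map `t` of the underlying spaces with `q' ∘ t = q`. -/
def Dominates (q' q : QF F) : Prop :=
  ∃ t : (Fin q.dim → F) →ₗ[F] (Fin q'.dim → F), Function.Injective t ∧
    ∀ x, q'.eval (t x) = q.eval x

/-- The affine quadric polynomial `∑ cᵢⱼ XᵢXⱼ` of a quadratic form. -/
noncomputable def toPoly (q : QF F) : MvPolynomial (Fin q.dim) F :=
  ∑ i, ∑ j, MvPolynomial.C (q.c i j) * (MvPolynomial.X i * MvPolynomial.X j)

/-- The affine coordinate ring of the (reduced) quadric `q = 0`. -/
abbrev CoordRing (q : QF F) : Type _ :=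
  MvPolynomial (Fin q.dim) F ⧸ (Ideal.span {q.toPoly}).radical

/-- The function field of the quadric `q = 0` (assuming the quadric is integral). -/
abbrev FunctionField (q : QF F) [IsDomain (CoordRing q)] : Type _ :=
  FractionRing (CoordRing q)

/-- The canonical ring homomorphism from a base field `F` into the function field of a
quadric defined over an extension field `K` of `F`. -/
noncomputable def toFunctionField {K : Type*} [Field K] [Algebra F K] (q : QF K)
    [IsDomain (CoordRing q)] : F →+* FunctionField q :=
  (algebraMap (CoordRing q) (FunctionField q)).comp
    ((algebraMap K (CoordRing q)).comp (algebraMap F K))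

end QF

/-!
Since `K² ⊆ F`, the squares of the coefficients of a linear form over `K` lie in `F`. Hence a
totally isotropic subspace of dimension `k` of `φ_K`, for a nonsingular form `φ` over `F`, splits
off `k` hyperbolic planes whose complement is again the extension of a form `θ` over `F`, so `φ`
and `θ` differ by an element of `W_q(K/F)`.

Let `φ` become hyperbolic over `K(π)`. If `φ_K` is isotropic, then the case `k = 1` lowers the
dimension of `φ`. If `φ_K` is anisotropic, then it represents `c · π` at a generic point, for every
nonzero value `c` of `φ`: over the field of a generic point, `π = 0` is a quadratic equation
`z² + z = d`, and `φ` is hyperbolic over the extension defined by it. By the theorem of Cassels and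
Pfister, `c · π_K` then embeds isometrically into `φ_K`. In characteristic two the graph of the
embedding is a totally isotropic subspace of `(c · π ⊥ φ)_K` of dimension `dim π`, so that `φ` is
congruent to `c · π` plus a form of dimension `dim φ - dim π`. Induct on the dimension.
-/

namespace QF

open QuadraticMap (polar polarBilin)
open Module (finrank)

section MatrixForms

variable {R S : Type*} [CommRing R] [CommRing S]
  {ι κ : Type*} [DecidableEq ι] [DecidableEq κ]

theorem comp_single_one (f : R →+* S) (i : ι) :
    f ∘ (Pi.single i 1 : ι → R) = (Pi.single i 1 : ι → S) := by
  ext j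
  simp [Pi.single_apply, apply_ite f]

variable [Fintype ι] [Fintype κ]

theorem toQuadraticForm'_apply (c : Matrix ι ι R) (x : ι → R) :
    c.toQuadraticForm' x = ∑ i, ∑ j, c i j * x i * x j := by
  rw [Matrix.toQuadraticForm', LinearMap.BilinMap.toQuadraticMap_apply, Matrix.toLinearMap₂'_apply]
  simp only [smul_eq_mul, mul_comm, mul_left_comm]

theorem polar_toQuadraticForm' (c : Matrix ι ι R) (x y : ι → R) :
    polar c.toQuadraticForm' x y = x ⬝ᵥ (c + c.transpose).mulVec y := by
  rw [Matrix.toQuadraticForm', LinearMap.BilinMap.polar_toQuadraticMap,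
    Matrix.toLinearMap₂'_apply', Matrix.toLinearMap₂'_apply', Matrix.add_mulVec, dotProduct_add,
    Matrix.mulVec_transpose, Matrix.dotProduct_mulVec, Matrix.dotProduct_mulVec,
    dotProduct_comm x (Matrix.vecMul y c)]

theorem toQuadraticForm'_map (f : R →+* S) (c : Matrix ι ι R) (x : ι → R) :
    (c.map f).toQuadraticForm' (f ∘ x) = f (c.toQuadraticForm' x) := by
  simp only [toQuadraticForm'_apply, Matrix.map_apply, Function.comp_apply, map_sum, map_mul]

theorem polar_map (f : R →+* S) (c : Matrix ι ι R) (x y : ι → R) :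
    polar (c.map f).toQuadraticForm' (f ∘ x) (f ∘ y) = f (polar c.toQuadraticForm' x y) := by
  have comp_add : (f ∘ x) + (f ∘ y) = f ∘ (x + y) := by ext; simp
  simp only [polar, map_sub, comp_add, toQuadraticForm'_map]

theorem toQuadraticForm'_add (c d : Matrix ι ι R) :
    (c + d).toQuadraticForm' = c.toQuadraticForm' + d.toQuadraticForm' := by
  ext x
  simp [toQuadraticForm'_apply, add_mul, Finset.sum_add_distrib]

theorem toQuadraticForm'_smul (a : R) (c : Matrix ι ι R) :
    (a • c).toQuadraticForm' = a • c.toQuadraticForm' := by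
  ext x
  simp [toQuadraticForm'_apply, Finset.mul_sum, mul_assoc]

theorem toQuadraticForm'_diagonal (v : ι → R) (x : ι → R) :
    (Matrix.diagonal v).toQuadraticForm' x = ∑ i, v i * x i ^ 2 := by
  simp [toQuadraticForm'_apply, Matrix.diagonal_apply, pow_two, mul_assoc]

variable {V V' : Type*} [AddCommGroup V] [Module R V] [AddCommGroup V'] [Module R V']

/-- Equality of the Gram data of two families of vectors. In characteristic two these data consist
of the polar products and of the values of the form. -/
def SameGram {J : Type*} (Q : QuadraticForm R V) (σ : J → V) (Q' : QuadraticForm R V')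
    (τ : J → V') : Prop :=
  (∀ j, Q (σ j) = Q' (τ j)) ∧ ∀ i j, polar Q (σ i) (σ j) = polar Q' (τ i) (τ j)

namespace SameGram

variable {J : Type*} {Q : QuadraticForm R V} {Q' : QuadraticForm R V'} {σ : J → V} {τ : J → V'}

theorem symm (h : SameGram Q σ Q' τ) : SameGram Q' τ Q σ :=
  ⟨fun j ↦ (h.1 j).symm, fun i j ↦ (h.2 i j).symm⟩

theorem trans {V'' : Type*} [AddCommGroup V''] [Module R V''] {Q'' : QuadraticForm R V''}
    {υ : J → V''} (h : SameGram Q σ Q' τ) (h' : SameGram Q' τ Q'' υ) : SameGram Q σ Q'' υ :=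
  ⟨fun j ↦ (h.1 j).trans (h'.1 j), fun i j ↦ (h.2 i j).trans (h'.2 i j)⟩

theorem map {c : Matrix ι ι R} {d : Matrix κ κ R} {σ : J → ι → R} {τ : J → κ → R}
    (h : SameGram c.toQuadraticForm' σ d.toQuadraticForm' τ) (f : R →+* S) :
    SameGram (c.map f).toQuadraticForm' (fun j ↦ f ∘ σ j) (d.map f).toQuadraticForm'
      fun j ↦ f ∘ τ j :=
  ⟨fun j ↦ by rw [toQuadraticForm'_map, toQuadraticForm'_map, h.1],
    fun i j ↦ by rw [polar_map, polar_map, h.2]⟩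

theorem map_sum_smul [Fintype J] (h : SameGram Q σ Q' τ) (x : J → R) :
    Q (∑ j, x j • σ j) = Q' (∑ j, x j • τ j) := by
  classical
  induction (Finset.univ : Finset J) using Finset.induction_on with
  | empty => simp
  | insert i s hi ih =>
    rw [Finset.sum_insert hi, Finset.sum_insert hi, QuadraticMap.map_add Q,
      QuadraticMap.map_add Q', ih, QuadraticMap.map_smul, QuadraticMap.map_smul, h.1]
    congr 1
    rw [← QuadraticMap.polarBilin_apply_apply, ← QuadraticMap.polarBilin_apply_apply]
    simp [h.2]

end SameGram

theorem sameGram_cons {n : ℕ} {Q : QuadraticForm R V} {Q' : QuadraticForm R V'} {v : V} {v' : V'}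
    {σ : Fin n → V} {τ : Fin n → V'} :
    SameGram Q (Fin.cons v σ : Fin (n + 1) → V) Q' (Fin.cons v' τ : Fin (n + 1) → V') ↔
      Q v = Q' v' ∧ (∀ j, polar Q v (σ j) = polar Q' v' (τ j)) ∧ SameGram Q σ Q' τ := by
  simp only [SameGram, Fin.forall_fin_succ, Fin.cons_zero, Fin.cons_succ, QuadraticMap.polar_self,
    QuadraticMap.polar_comm Q _ v, QuadraticMap.polar_comm Q' _ v']
  constructor
  · rintro ⟨⟨hv, hσ⟩, ⟨-, hvσ⟩, h⟩
    exact ⟨hv, hvσ, hσ, fun i ↦ (h i).2⟩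
  · rintro ⟨hv, hvσ, hσ, h⟩
    exact ⟨⟨hv, hσ⟩, ⟨by rw [hv], hvσ⟩, fun i ↦ ⟨hvσ i, h i⟩⟩

theorem sum_smul_single_one (x : ι → R) : ∑ i, x i • (Pi.single i 1 : ι → R) = x := by
  ext j
  simp [Finset.sum_apply, Pi.single_apply]

theorem ext_single {σ : Type*} [Finite σ] [DecidableEq σ] {Q Q' : QuadraticForm R (σ → R)}
    (hQ : ∀ i, Q (Pi.single i 1) = Q' (Pi.single i 1))
    (hpolar : ∀ i j, polar Q (Pi.single i 1) (Pi.single j 1) =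
      polar Q' (Pi.single i 1) (Pi.single j 1)) : Q = Q' := by
  ext x
  have := Fintype.ofFinite σ
  simpa only [sum_smul_single_one] using SameGram.map_sum_smul ⟨hQ, hpolar⟩ x

theorem exists_toQuadraticForm'_eq (Q : QuadraticForm R (ι → R)) :
    ∃ c : Matrix ι ι R, c.toQuadraticForm' = Q := by
  let _ : LinearOrder ι := LinearOrder.lift' (Fintype.equivFin ι) (Fintype.equivFin ι).injective
  exact ⟨LinearMap.toMatrix₂' R (Q.toBilin (Pi.basisFun R ι)), by
    rw [Matrix.toQuadraticForm', Matrix.toLinearMap₂'_toMatrix',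
      QuadraticMap.toQuadraticMap_toBilin]⟩

theorem polar_isometry {Q : QuadraticForm R V} {Q' : QuadraticForm R V'} (A : Q →qᵢ Q') (x y : V) :
    polar Q' (A x) (A y) = polar Q x y := by
  simp [polar, ← map_add]

theorem exists_isometry_map (f : R →+* S) {c : Matrix ι ι R} {d : Matrix κ κ R}
    (A : c.toQuadraticForm' →qᵢ d.toQuadraticForm') :
    ∃ A' : (c.map f).toQuadraticForm' →qᵢ (d.map f).toQuadraticForm',
      ∀ x, A' (f ∘ x) = f ∘ A x := by
  let T := Matrix.toLin' ((LinearMap.toMatrix' A.toLinearMap).map f)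
  have hT (x : ι → R) : T (f ∘ x) = f ∘ A x := by
    ext i
    rw [Matrix.toLin'_apply, ← RingHom.map_mulVec, LinearMap.toMatrix'_mulVec]
    rfl
  have hpolar (x y : ι → S) : polar ((d.map f).toQuadraticForm'.comp T) x y =
      polar (d.map f).toQuadraticForm' (T x) (T y) := by
    simp [polar]
  have hcomp : (d.map f).toQuadraticForm'.comp T = (c.map f).toQuadraticForm' := by
    refine ext_single (fun i ↦ ?_) fun i j ↦ ?_
    · rw [QuadraticMap.comp_apply, ← comp_single_one f, hT, toQuadraticForm'_map,
        toQuadraticForm'_map, A.map_app]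
    · rw [hpolar, ← comp_single_one f, ← comp_single_one f, hT, hT, polar_map, polar_map,
        polar_isometry]
  exact ⟨⟨T, fun x ↦ DFunLike.congr_fun hcomp x⟩, hT⟩

end MatrixForms

section TotallyIsotropic

variable {E V V' W : Type*} [Field E] [AddCommGroup V] [Module E V]
  [AddCommGroup V'] [Module E V'] [AddCommGroup W] [Module E W]

/-- Nonsingularity of a quadratic form: its polar form has trivial radical. On coordinate spaces
this is `QF.Nonsingular`, see `nonsingular_iff`. -/
def IsNonsingular (Q : QuadraticForm E V) : Prop := (polarBilin Q).SeparatingLeft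

/-- The subspace `I` is totally isotropic for `Q`: the quadratic form `Q`, and not only its polar
form, vanishes on `I`. -/
def IsTotallyIsotropic (Q : QuadraticForm E V) (I : Submodule E V) : Prop := ∀ x ∈ I, Q x = 0

/-- Metabolicity of a quadratic form: some totally isotropic subspace has at least half the
dimension. For nonsingular forms this is hyperbolicity, see `hyperbolic_iff_hasLagrangian`. -/
def HasLagrangian (Q : QuadraticForm E V) : Prop :=
  ∃ I : Submodule E V, IsTotallyIsotropic Q I ∧ finrank E V ≤ 2 * finrank E I

variable {Q : QuadraticForm E V} {Q' : QuadraticForm E V'}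

theorem IsNonsingular.nondegenerate (hQ : IsNonsingular Q) : (polarBilin Q).Nondegenerate :=
  (LinearMap.IsRefl.nondegenerate_iff_separatingLeft
    fun x y hxy ↦ by simpa [QuadraticMap.polar_comm] using hxy).2 hQ

theorem IsNonsingular.exists_polar_eq_one (hQ : IsNonsingular Q) {x : V} (hx : x ≠ 0) :
    ∃ y, polar Q x y = 1 := by
  obtain ⟨y, hy⟩ : ∃ y, polar Q x y ≠ 0 := by
    by_contra! h
    exact hx (hQ x h)
  exact ⟨(polar Q x y)⁻¹ • y, by simp [hy]⟩

theorem IsNonsingular.injective (hQ : IsNonsingular Q) (A : Q →qᵢ Q') : Function.Injective A := by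
  rw [injective_iff_map_eq_zero]
  intro x hx
  refine hQ x fun y ↦ ?_
  rw [QuadraticMap.polarBilin_apply_apply, ← polar_isometry A, hx, QuadraticMap.polar_zero_left]

theorem IsNonsingular.equivalent (hQ : IsNonsingular Q) (h : Q.Equivalent Q') :
    IsNonsingular Q' := by
  obtain ⟨e⟩ := h
  intro x hx
  refine (e.symm.toLinearEquiv.map_eq_zero_iff).1 (hQ _ fun y ↦ ?_)
  rw [QuadraticMap.polarBilin_apply_apply, ← polar_isometry e.toIsometry]
  exact (congrArg (polar Q' · _) (e.toLinearEquiv.apply_symm_apply x)).trans (hx _)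

theorem isNonsingular_prod : IsNonsingular (Q.prod Q') ↔ IsNonsingular Q ∧ IsNonsingular Q' := by
  refine ⟨fun h ↦ ⟨fun x hx ↦ ?_, fun x hx ↦ ?_⟩, fun ⟨h, h'⟩ ⟨x, x'⟩ hx ↦ ?_⟩
  · exact congrArg Prod.fst (h (x, 0) fun y ↦ by simpa using hx y.1)
  · exact congrArg Prod.snd (h (0, x) fun y ↦ by simpa using hx y.2)
  · exact Prod.ext (h x fun y ↦ by simpa using hx (y, 0)) (h' x' fun y ↦ by simpa using hx (0, y))

theorem IsNonsingular.smul (hQ : IsNonsingular Q) {a : E} (ha : a ≠ 0) : IsNonsingular (a • Q) :=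
  fun x hx ↦ hQ x fun y ↦ by
    have := hx y
    rw [QuadraticMap.polarBilin_apply_apply, FunLike.coe_smul, QuadraticMap.polar_smul] at this
    exact (mul_eq_zero.1 this).resolve_left ha

theorem isNonsingular_toQuadraticForm'_iff {ι : Type*} [Fintype ι] [DecidableEq ι]
    {c : Matrix ι ι E} : IsNonsingular c.toQuadraticForm' ↔ IsUnit (c + c.transpose) := by
  rw [← Matrix.mulVec_injective_iff_isUnit, ← Matrix.coe_mulVecLin, injective_iff_map_eq_zero]
  refine forall_congr' fun x ↦ imp_congr_left ?_
  rw [Matrix.mulVecLin_apply, ← dotProduct_eq_zero_iff]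
  simp only [QuadraticMap.polarBilin_apply_apply, QuadraticMap.polar_comm _ x,
    polar_toQuadraticForm', dotProduct_comm]

theorem IsNonsingular.map {F : Type*} [Field F] (f : F →+* E) {ι : Type*} [Fintype ι]
    [DecidableEq ι] {c : Matrix ι ι F} (hc : IsNonsingular c.toQuadraticForm') :
    IsNonsingular (c.map f).toQuadraticForm' := by
  rw [isNonsingular_toQuadraticForm'_iff] at hc ⊢
  simpa [Matrix.map_add, Matrix.transpose_map] using hc.map f.mapMatrix

theorem equivalent_of_isometry [FiniteDimensional E V] [FiniteDimensional E V']
    (hQ : IsNonsingular Q) (A : Q →qᵢ Q') (hdim : finrank E V = finrank E V') :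
    Q.Equivalent Q' :=
  ⟨{ LinearEquiv.ofInjectiveOfFinrankEq A.toLinearMap (hQ.injective A) hdim with
      map_app' := A.map_app }⟩

theorem prod_comm_equivalent (Q : QuadraticForm E V) (Q' : QuadraticForm E V') :
    (Q.prod Q').Equivalent (Q'.prod Q) :=
  ⟨QuadraticMap.IsometryEquiv.prodComm Q Q'⟩

theorem prod_assoc_equivalent (Q : QuadraticForm E V) (Q' : QuadraticForm E V')
    (Q'' : QuadraticForm E W) : ((Q.prod Q').prod Q'').Equivalent (Q.prod (Q'.prod Q'')) :=
  ⟨{ LinearEquiv.prodAssoc E V V' W with map_app' := fun x ↦ by simp [add_assoc] }⟩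

theorem exists_equivalent_toQuadraticForm' [FiniteDimensional E V] (Q : QuadraticForm E V) :
    ∃ c : Matrix (Fin (finrank E V)) (Fin (finrank E V)) E, c.toQuadraticForm'.Equivalent Q := by
  obtain ⟨c, hc⟩ := exists_toQuadraticForm'_eq (Q.basisRepr (Module.finBasis E V))
  exact ⟨c, hc ▸ ⟨(Q.isometryEquivBasisRepr _).symm⟩⟩

theorem IsTotallyIsotropic.polar_eq_zero {I : Submodule E V} (hI : IsTotallyIsotropic Q I)
    {x y : V} (hx : x ∈ I) (hy : y ∈ I) : polar Q x y = 0 := by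
  simp [polar, hI _ hx, hI _ hy, hI _ (I.add_mem hx hy)]

theorem IsTotallyIsotropic.exists_equivalent {I : Submodule E V} (hI : IsTotallyIsotropic Q I)
    (h : Q.Equivalent Q') :
    ∃ J : Submodule E V', IsTotallyIsotropic Q' J ∧ finrank E J = finrank E I := by
  obtain ⟨e⟩ := h
  refine ⟨I.map e.toLinearEquiv.toLinearMap, ?_, LinearEquiv.finrank_map_eq e.toLinearEquiv I⟩
  rintro _ ⟨x, hx, rfl⟩
  exact (e.map_app x).trans (hI x hx)

theorem HasLagrangian.equivalent (h : HasLagrangian Q) (e : Q.Equivalent Q') :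
    HasLagrangian Q' := by
  obtain ⟨I, hI, hdim⟩ := h
  obtain ⟨J, hJ, hJI⟩ := hI.exists_equivalent e
  exact ⟨J, hJ, by rwa [hJI, ← e.some.toLinearEquiv.finrank_eq]⟩

theorem hasLagrangian_congr (e : Q.Equivalent Q') : HasLagrangian Q ↔ HasLagrangian Q' :=
  ⟨fun h ↦ h.equivalent e, fun h ↦ h.equivalent e.symm⟩

theorem hasLagrangian_of_isotropic (hdim : finrank E V ≤ 2) {x : V} (hx : x ≠ 0) (hQx : Q x = 0) :
    HasLagrangian Q := by
  refine ⟨E ∙ x, fun y hy ↦ ?_, by rw [finrank_span_singleton hx]; exact hdim⟩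
  obtain ⟨t, rfl⟩ := Submodule.mem_span_singleton.1 hy
  rw [QuadraticMap.map_smul, hQx, smul_zero]

theorem exists_isTotallyIsotropic_prod [CharP E 2] (A : Q →qᵢ Q') :
    ∃ I, IsTotallyIsotropic (Q.prod Q') I ∧ finrank E I = finrank E V := by
  refine ⟨A.toLinearMap.graph, ?_, ?_⟩
  · rintro ⟨x, y⟩ (rfl : y = A x)
    rw [QuadraticMap.prod_apply, A.map_app, CharTwo.add_self_eq_zero]
  · rw [LinearMap.graph_eq_range_prod]
    exact LinearMap.finrank_range_of_inj fun x y h ↦ congrArg Prod.fst h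

theorem finrank_map_add_finrank_inf_ker [FiniteDimensional E V] (f : V →ₗ[E] V')
    (I : Submodule E V) :
    finrank E (I.map f) + finrank E (I ⊓ LinearMap.ker f : Submodule E V) = finrank E I := by
  rw [← LinearMap.finrank_range_add_finrank_ker (f.domRestrict I), LinearMap.range_domRestrict,
    LinearMap.ker_domRestrict, ← Submodule.finrank_map_subtype_eq, Submodule.map_comap_subtype]

variable [FiniteDimensional E V] [FiniteDimensional E V']

theorem HasLagrangian.prod (h : HasLagrangian Q) (h' : HasLagrangian Q') :
    HasLagrangian (Q.prod Q') := by
  obtain ⟨I, hI, hdim⟩ := h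
  obtain ⟨J, hJ, hdim'⟩ := h'
  refine ⟨LinearMap.range (I.subtype.prodMap J.subtype), ?_, ?_⟩
  · rintro _ ⟨⟨x, y⟩, rfl⟩
    rw [QuadraticMap.prod_apply]
    exact (congrArg₂ (· + ·) (hI x x.2) (hJ y y.2)).trans (add_zero 0)
  · rw [LinearMap.finrank_range_of_inj (I.injective_subtype.prodMap J.injective_subtype),
      Module.finrank_prod, Module.finrank_prod]
    omega

theorem HasLagrangian.of_isometry [CharP E 2] (A : Q →qᵢ Q')
    (hdim : finrank E V' ≤ finrank E V) : HasLagrangian (Q.prod Q') := by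
  obtain ⟨I, hI, hdimI⟩ := exists_isTotallyIsotropic_prod A
  exact ⟨I, hI, by rw [Module.finrank_prod]; omega⟩

theorem hasLagrangian_prod_self [CharP E 2] (Q : QuadraticForm E V) : HasLagrangian (Q.prod Q) :=
  .of_isometry (.id Q) le_rfl

theorem exists_isTotallyIsotropic_of_prod (hQ' : IsNonsingular Q') {I : Submodule E (V × V')}
    (hI : IsTotallyIsotropic (Q.prod Q') I) (h : HasLagrangian Q') :
    ∃ I' : Submodule E V,
      IsTotallyIsotropic Q I' ∧ 2 * finrank E I ≤ 2 * finrank E I' + finrank E V' := by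
  obtain ⟨J, hJ, hdim⟩ := h
  let fst := LinearMap.fst E V V'
  let snd := LinearMap.snd E V V'
  let A := I ⊓ J.comap snd
  let J₀ := J ⊓ I.comap (LinearMap.inr E V V')
  let J₁ := LinearMap.BilinForm.orthogonal (polarBilin Q') J₀
  have sup_le : I.map snd ⊔ J ≤ J₁ := by
    refine sup_le ?_ fun y hy z hz ↦ hJ.polar_eq_zero hz.1 hy
    rintro _ ⟨x, hx, rfl⟩ z hz
    simpa using! hI.polar_eq_zero hz.2 hx
  have map_snd_A : A.map snd = I.map snd ⊓ J := SetLike.coe_injective (Set.image_inter_preimage ..)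
  have A_inf_ker_snd : A ⊓ LinearMap.ker snd = I ⊓ LinearMap.ker snd := by
    ext x
    simp +contextual [A]
  have A_inf_ker_fst : A ⊓ LinearMap.ker fst = J₀.map (LinearMap.inr E V V') := by
    ext ⟨x, y⟩
    constructor
    · rintro ⟨⟨hI, hJ⟩, rfl : x = 0⟩
      exact ⟨y, ⟨hJ, hI⟩, rfl⟩
    · rintro ⟨z, ⟨hJ, hI⟩, h⟩
      obtain ⟨rfl, rfl⟩ := Prod.mk.inj h
      exact ⟨⟨hI, hJ⟩, rfl⟩
  refine ⟨A.map fst, ?_, ?_⟩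
  · rintro _ ⟨x, hx, rfl⟩
    have hQx : Q x.1 + Q' x.2 = 0 := hI x hx.1
    rwa [show Q' x.2 = 0 from hJ _ hx.2, add_zero] at hQx
  have rank_fst_A := finrank_map_add_finrank_inf_ker fst A
  have rank_snd_A := finrank_map_add_finrank_inf_ker snd A
  have rank_snd_I := finrank_map_add_finrank_inf_ker snd I
  have rank_sup_add_inf := Submodule.finrank_sup_add_finrank_inf_eq (I.map snd) J
  have rank_sup_le := Submodule.finrank_mono sup_le
  have rank_J₁ : finrank E J₁ = finrank E V' - finrank E J₀ :=
    LinearMap.BilinForm.finrank_orthogonal hQ'.nondegenerate J₀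
  have rank_J₀_le := Submodule.finrank_le J₀
  rw [A_inf_ker_fst, ← (Submodule.equivMapOfInjective _ LinearMap.inr_injective J₀).finrank_eq]
    at rank_fst_A
  rw [A_inf_ker_snd, map_snd_A] at rank_snd_A
  omega

theorem HasLagrangian.of_prod (hQ' : IsNonsingular Q') (h : HasLagrangian (Q.prod Q'))
    (h' : HasLagrangian Q') : HasLagrangian Q := by
  obtain ⟨I, hI, hdim⟩ := h
  obtain ⟨I', hI', hdim'⟩ := exists_isTotallyIsotropic_of_prod hQ' hI h'
  exact ⟨I', hI', by rw [Module.finrank_prod] at hdim; omega⟩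

end TotallyIsotropic

section Forms

variable {F E : Type*} [Field F] [Field E]

/-- The quadratic form on `Fin q.dim → E` with coefficient matrix `q.c`. -/
noncomputable abbrev form (q : QF E) : QuadraticForm E (Fin q.dim → E) := q.c.toQuadraticForm'

theorem form_apply (q : QF E) (x : Fin q.dim → E) : q.form x = q.eval x :=
  toQuadraticForm'_apply q.c x

theorem isometric_iff {q q' : QF E} : q.Isometric q' ↔ q.form.Equivalent q'.form := by
  simp only [Isometric, ← form_apply]
  exact ⟨fun ⟨e, he⟩ ↦ ⟨{ e with map_app' := he }⟩, fun ⟨e⟩ ↦ ⟨e.toLinearEquiv, e.map_app⟩⟩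

theorem nonsingular_iff {q : QF E} : q.Nonsingular ↔ IsNonsingular q.form := by
  rw [isNonsingular_toQuadraticForm'_iff, ← Matrix.mulVec_injective_iff_isUnit,
    ← Matrix.coe_mulVecLin, injective_iff_map_eq_zero]
  rfl

theorem orthSum_equivalent (q q' : QF E) :
    (q.form.prod q'.form).Equivalent (q.orthSum q').form := by
  refine ⟨{ (LinearEquiv.sumArrowLequivProdArrow (Fin q.dim) (Fin q'.dim) E E).symm.trans
    (LinearEquiv.funCongrLeft E E finSumFinEquiv.symm) with map_app' := ?_ }⟩
  rintro ⟨x, y⟩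
  change (Matrix.reindex finSumFinEquiv finSumFinEquiv
    (Matrix.fromBlocks q.c 0 0 q'.c)).toQuadraticForm'
      (fun i ↦ Sum.elim x y (finSumFinEquiv.symm i)) = _
  rw [toQuadraticForm'_apply, QuadraticMap.prod_apply, toQuadraticForm'_apply,
    toQuadraticForm'_apply]
  simp [Fin.sum_univ_add]

theorem form_smul (a : E) (q : QF E) : (q.smul a).form = a • q.form :=
  toQuadraticForm'_smul a q.c

theorem map_orthSum (f : F →+* E) (q q' : QF F) :
    (q.orthSum q').map f = (q.map f).orthSum (q'.map f) := by
  unfold QF.map orthSum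
  simp only
  congr 1
  ext i j
  refine Fin.addCases (fun i ↦ ?_) (fun i ↦ ?_) i <;>
  refine Fin.addCases (fun j ↦ ?_) (fun j ↦ ?_) j <;> simp <;> rfl

theorem map_smul (f : F →+* E) (a : F) (q : QF F) : (q.smul a).map f = (q.map f).smul (f a) := by
  unfold QF.map smul
  congr 1
  ext i j
  exact _root_.map_mul f _ _

theorem isNonsingular_orthSum {q q' : QF E} :
    IsNonsingular (q.orthSum q').form ↔ IsNonsingular q.form ∧ IsNonsingular q'.form := by
  rw [← isNonsingular_prod]
  exact ⟨fun h ↦ h.equivalent (orthSum_equivalent q q').symm,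
    fun h ↦ h.equivalent (orthSum_equivalent q q')⟩

theorem hasLagrangian_orthSum {q q' : QF E} :
    HasLagrangian (q.orthSum q').form ↔ HasLagrangian (q.form.prod q'.form) :=
  (hasLagrangian_congr (orthSum_equivalent q q')).symm

theorem bin_apply (a b : E) (x : Fin 2 → E) :
    (bin a b).form x = a * x 0 ^ 2 + x 0 * x 1 + b * x 1 ^ 2 := by
  change (!![a, 1; 0, b] : Matrix (Fin 2) (Fin 2) E).toQuadraticForm' x = _
  rw [toQuadraticForm'_apply]
  simp only [Fin.sum_univ_two, Matrix.of_apply, Matrix.cons_val', Matrix.cons_val_zero,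
    Matrix.cons_val_one, Matrix.cons_val_fin_one]
  ring

theorem hypPlane_apply (x : Fin 2 → E) : (hypPlane : QF E).form x = x 0 * x 1 :=
  (bin_apply 0 0 x).trans (by ring)

theorem hasLagrangian_hypPlane : HasLagrangian (hypPlane : QF E).form := by
  have single_ne_zero : (Pi.single 0 1 : Fin 2 → E) ≠ 0 := by simp
  exact hasLagrangian_of_isotropic (Module.finrank_fin_fun E).le single_ne_zero
    ((hypPlane_apply _).trans (by simp))

variable [CharP E 2]

theorem isNonsingular_bin (a b : E) : IsNonsingular (bin a b).form := by
  rw [isNonsingular_toQuadraticForm'_iff, Matrix.isUnit_iff_isUnit_det]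
  change IsUnit (!![a, 1; 0, b] + !![a, 1; 0, b].transpose).det
  simp [Matrix.det_fin_two, CharTwo.add_self_eq_zero]

theorem isNonsingular_hypPlane : IsNonsingular (hypPlane : QF E).form := isNonsingular_bin 0 0

theorem isNonsingular_hyp_and_hasLagrangian (k : ℕ) :
    IsNonsingular (hyp k : QF E).form ∧ HasLagrangian (hyp k : QF E).form := by
  induction k with
  | zero =>
    exact ⟨fun x _ ↦ Subsingleton.elim (α := Fin 0 → E) x 0,
      ⊥, by simp [IsTotallyIsotropic], Module.finrank_fin_fun E |>.trans_le (Nat.zero_le _)⟩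
  | succ k ih =>
    exact ⟨isNonsingular_orthSum.2 ⟨isNonsingular_hypPlane, ih.1⟩,
      hasLagrangian_orthSum.2 (hasLagrangian_hypPlane.prod ih.2)⟩

end Forms

section HyperbolicSplitting

variable {F E : Type*} [Field F] [Field E]

theorem exists_isotropic_polar_comp_eq_one (f : F →+* E) {ι : Type*} [Fintype ι] [DecidableEq ι]
    {c : Matrix ι ι F} (hc : IsNonsingular c.toQuadraticForm') {x : ι → E} (hx : x ≠ 0)
    (hcx : (c.map f).toQuadraticForm' x = 0) :
    ∃ (x' : ι → E) (y : ι → F), y ≠ 0 ∧ (c.map f).toQuadraticForm' x' = 0 ∧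
      polar (c.map f).toQuadraticForm' x' (f ∘ y) = 1 := by
  obtain ⟨i, hi⟩ : ∃ i, polar (c.map f).toQuadraticForm' x (Pi.single i 1) ≠ 0 := by
    by_contra! h
    refine hx ((hc.map f) x fun v ↦ ?_)
    rw [← sum_smul_single_one v, map_sum]
    exact Finset.sum_eq_zero fun i _ ↦ by simp [h]
  refine ⟨(polar (c.map f).toQuadraticForm' x (Pi.single i 1))⁻¹ • x, Pi.single i 1,
    by simp, ?_, ?_⟩
  · rw [QuadraticMap.map_smul, hcx, smul_zero]
  · rw [comp_single_one, QuadraticMap.polar_smul_left, smul_eq_mul, inv_mul_cancel₀ hi]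

theorem polar_eq_zero_of_comp (f : F →+* E) {ι κ : Type*} [Fintype ι] [DecidableEq ι] [Finite κ]
    {c : Matrix ι ι F} {T : (κ → E) →ₗ[E] ι → E} {A : (κ → F) → ι → F}
    (hT : ∀ u, T (f ∘ u) = f ∘ A u) {y : ι → F} (hA : ∀ u, polar c.toQuadraticForm' (A u) y = 0)
    (u : κ → E) : polar (c.map f).toQuadraticForm' (T u) (f ∘ y) = 0 := by
  classical
  suffices polarBilin (c.map f).toQuadraticForm' (f ∘ y) ∘ₗ T = 0 from
    (QuadraticMap.polar_comm ..).trans (LinearMap.congr_fun this u)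
  refine LinearMap.pi_ext' fun j ↦ LinearMap.ext_ring ?_
  change polar (c.map f).toQuadraticForm' (f ∘ y) (T (Pi.single j 1)) = 0
  rw [← comp_single_one f, hT, QuadraticMap.polar_comm, polar_map, hA, map_zero]

variable [CharP E 2]

theorem exists_diagonal_eq_sq (f : F →+* E) (hE : ∀ x : E, ∃ y : F, f y = x ^ 2)
    {ι : Type*} [Fintype ι] [DecidableEq ι] (l : (ι → E) →ₗ[E] E) :
    ∃ v : ι → F, ∀ u, ((Matrix.diagonal v).map f).toQuadraticForm' u = l u ^ 2 := by
  choose sq hsq using hE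
  refine ⟨fun i ↦ sq (l (Pi.single i 1)), fun u ↦ ?_⟩
  rw [Matrix.diagonal_map f.map_zero, toQuadraticForm'_diagonal]
  conv_rhs => rw [← sum_smul_single_one u, map_sum, CharTwo.sum_sq]
  simp [hsq, mul_pow, mul_comm]

theorem isNonsingular_add_diagonal {ι : Type*} [Fintype ι] [DecidableEq ι] {c : Matrix ι ι E}
    (hc : IsNonsingular c.toQuadraticForm') (v : ι → E) :
    IsNonsingular (c + Matrix.diagonal v).toQuadraticForm' := by
  rw [isNonsingular_toQuadraticForm'_iff] at hc ⊢
  rwa [Matrix.transpose_add, Matrix.diagonal_transpose, add_add_add_comm, Matrix.diagonal_add,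
    Matrix.diagonal_eq_zero.2 (funext fun i ↦ CharTwo.add_self_eq_zero (v i)), add_zero]

variable {V : Type*} [AddCommGroup V] [Module E V]

theorem isNonsingular_comp_subtype_ker {Q : QuadraticForm E V} (hQ : IsNonsingular Q) {y z : V}
    (hyz : polar Q y z = 1) :
    IsNonsingular
      (Q.comp (LinearMap.ker ((polarBilin Q y).prod (polarBilin Q z))).subtype) := by
  rintro ⟨u, hu⟩ hu_rad
  obtain ⟨huy, huz⟩ := Prod.ext_iff.1 (LinearMap.mem_ker.1 hu)
  refine Subtype.ext (hQ u fun v ↦ ?_)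
  let w := v - polar Q y v • z - polar Q z v • y
  have hw : w ∈ LinearMap.ker ((polarBilin Q y).prod (polarBilin Q z)) := by
    simp [w, hyz, QuadraticMap.polar_comm Q z y, QuadraticMap.polar_sub_right,
      QuadraticMap.polar_self, CharTwo.two_eq_zero]
  have huw : polar Q u w = 0 := hu_rad ⟨w, hw⟩
  have hv : v = w + polar Q y v • z + polar Q z v • y := by simp only [w]; abel
  have huy' : polar Q u y = 0 := (QuadraticMap.polar_comm ..).trans huy
  have huz' : polar Q u z = 0 := (QuadraticMap.polar_comm ..).trans huz
  rw [hv, QuadraticMap.polarBilin_apply_apply, QuadraticMap.polar_add_right,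
    QuadraticMap.polar_add_right, QuadraticMap.polar_smul_right, QuadraticMap.polar_smul_right,
    huw, huy', huz']
  simp

/-- The map is `(w, u) ↦ (w₀ + w₁ Q(y)) x + (w₁ + polar Q x (A u)) y + A u`. -/
theorem exists_isometry_hypPlane_prod {W : Type*} [AddCommGroup W] [Module E W]
    {Q : QuadraticForm E V} {x y : V} (hx : Q x = 0)
    (hxy : polar Q x y = 1) {Q₀ R : QuadraticForm E W} (A : Q₀ →qᵢ Q)
    (hA : ∀ u, polar Q (A u) y = 0) (hR : ∀ u, R u = Q₀ u + Q y * polar Q x (A u) ^ 2) :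
    Nonempty ((hypPlane : QF E).form.prod R →qᵢ Q) := by
  let l := polarBilin Q x ∘ₗ A.toLinearMap
  let w₀ : (Fin 2 → E) × W →ₗ[E] E := LinearMap.proj 0 ∘ₗ LinearMap.fst E _ _
  let w₁ : (Fin 2 → E) × W →ₗ[E] E := LinearMap.proj 1 ∘ₗ LinearMap.fst E _ _
  let T : (Fin 2 → E) × W →ₗ[E] V := (w₀ + Q y • w₁).smulRight x +
    (w₁ + l ∘ₗ LinearMap.snd E _ _).smulRight y + A.toLinearMap ∘ₗ LinearMap.snd E _ _
  refine ⟨⟨T, fun ⟨(w : Fin 2 → E), u⟩ ↦ ?_⟩⟩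
  have hT : T (w, u) = (w 0 + Q y * w 1) • x + (w 1 + polar Q x (A u)) • y + A u := rfl
  rw [QuadraticMap.prod_apply, hypPlane_apply]
  change Q (T (w, u)) = _
  rw [hT, QuadraticMap.map_add Q, QuadraticMap.map_add Q, QuadraticMap.map_smul,
    QuadraticMap.map_smul, A.map_app, hx, QuadraticMap.polar_add_left,
    QuadraticMap.polar_smul_left, QuadraticMap.polar_smul_left, QuadraticMap.polar_smul_left,
    QuadraticMap.polar_smul_right, QuadraticMap.polar_comm Q y, hA, hxy, hR]
  simp only [smul_eq_mul]
  linear_combination (Q y * w 1 ^ 2 + 2 * Q y * w 1 * polar Q x (A u) + w 0 * polar Q x (A u)) *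
    CharTwo.two_eq_zero (R := E)

theorem exists_isometry_polar_eq_zero [FiniteDimensional E V]
    {Q : QuadraticForm E V} (hQ : IsNonsingular Q) {y : V} (hy : y ≠ 0) :
    ∃ d : QF E, d.dim + 2 = finrank E V ∧ IsNonsingular d.form ∧
      ∃ A : d.form →qᵢ Q, ∀ u, polar Q (A u) y = 0 := by
  obtain ⟨z, hyz⟩ := hQ.exists_polar_eq_one hy
  let g := (polarBilin Q y).prod (polarBilin Q z)
  have surjective : Function.Surjective g := fun ⟨s, t⟩ ↦
    ⟨s • z + t • y, by
      simp [g, hyz, QuadraticMap.polar_comm Q z y, QuadraticMap.polar_self,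
        CharTwo.two_eq_zero]⟩
  have rank_nullity := LinearMap.finrank_range_add_finrank_ker g
  rw [LinearMap.range_eq_top.2 surjective, finrank_top, Module.finrank_prod,
    Module.finrank_self] at rank_nullity
  obtain ⟨c, ⟨e⟩⟩ := exists_equivalent_toQuadraticForm' (Q.comp (LinearMap.ker g).subtype)
  refine ⟨⟨_, c⟩, by simp only; omega, (isNonsingular_comp_subtype_ker hQ hyz).equivalent ⟨e.symm⟩,
    ⟨(LinearMap.ker g).subtype ∘ₗ e.toLinearEquiv.toLinearMap, e.map_app⟩, fun u ↦ ?_⟩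
  rw [QuadraticMap.polar_comm]
  exact congrArg Prod.fst (LinearMap.mem_ker.1 (e u).2)

/-- A purely inseparable extension of exponent one splits off the hyperbolic plane over the base:
the squares of the coefficients of a linear form over `K` lie in `F`, so the correction term by
which the complement of the plane differs from a form over `F` is itself defined over `F`. -/
theorem exists_hypPlane_prod_equivalent {K : Type*} [Field K] [CharP F 2] [CharP K 2] (f : F →+* K)
    (hK : ∀ x : K, ∃ y : F, f y = x ^ 2) {q : QF F} (hq : IsNonsingular q.form)
    {x : Fin q.dim → K} (hx : x ≠ 0) (hqx : (q.c.map f).toQuadraticForm' x = 0) :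
    ∃ d : QF F, d.dim + 2 = q.dim ∧ IsNonsingular d.form ∧
      ((hypPlane : QF K).form.prod (d.c.map f).toQuadraticForm').Equivalent
        (q.c.map f).toQuadraticForm' := by
  obtain ⟨x', y, hy, hqx', hx'y⟩ := exists_isotropic_polar_comp_eq_one f hq hx hqx
  obtain ⟨d₀, hdim, hd₀, A, hA⟩ := exists_isometry_polar_eq_zero hq hy
  obtain ⟨A', hA'⟩ := exists_isometry_map f A
  obtain ⟨v, hv⟩ :=
    exists_diagonal_eq_sq f hK (polarBilin (q.c.map f).toQuadraticForm' x' ∘ₗ A'.toLinearMap)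
  let d : QF F := ⟨d₀.dim, d₀.c + Matrix.diagonal (q.form y • v)⟩
  have hd : IsNonsingular d.form := isNonsingular_add_diagonal hd₀ _
  have hdA (u : Fin d₀.dim → K) : (d.c.map f).toQuadraticForm' u =
      (d₀.c.map f).toQuadraticForm' u + (q.c.map f).toQuadraticForm' (f ∘ y) *
        polar (q.c.map f).toQuadraticForm' x' (A' u) ^ 2 := by
    change ((d₀.c + Matrix.diagonal (q.form y • v)).map f).toQuadraticForm' u = _
    rw [Matrix.map_add f (map_add f), toQuadraticForm'_add, add_apply,
      Matrix.diagonal_smul, Matrix.map_smul' f _ _ (map_mul f), toQuadraticForm'_smul,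
      smul_apply, hv, ← toQuadraticForm'_map]
    rfl
  obtain ⟨T⟩ := exists_isometry_hypPlane_prod hqx' hx'y A' (polar_eq_zero_of_comp f hA' hA) hdA
  rw [Module.finrank_fin_fun] at hdim
  refine ⟨d, hdim, hd, equivalent_of_isometry
    (isNonsingular_prod.2 ⟨isNonsingular_hypPlane, hd.map f⟩) T ?_⟩
  rw [Module.finrank_prod, Module.finrank_fin_fun, Module.finrank_fin_fun, Module.finrank_fin_fun]
  change 2 + d₀.dim = q.dim
  omega

end HyperbolicSplitting

section Hyperbolic

variable {F K : Type*} [Field F] [Field K] [CharP K 2]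

theorem exists_hasLagrangian_prod_map [CharP F 2] (f : F →+* K)
    (hK : ∀ x : K, ∃ y : F, f y = x ^ 2) (k : ℕ) {q : QF F} (hq : IsNonsingular q.form)
    {I : Submodule K (Fin q.dim → K)} (hI : IsTotallyIsotropic (q.c.map f).toQuadraticForm' I)
    (hk : k ≤ finrank K I) :
    ∃ d : QF F, d.dim + 2 * k = q.dim ∧ IsNonsingular d.form ∧
      HasLagrangian ((q.c.map f).toQuadraticForm'.prod (d.c.map f).toQuadraticForm') := by
  induction k generalizing q with
  | zero => exact ⟨q, rfl, hq, hasLagrangian_prod_self _⟩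
  | succ k ih =>
    obtain ⟨x, hxI, hx⟩ := I.exists_mem_ne_zero_of_ne_bot (by rintro rfl; simp at hk)
    obtain ⟨q₁, hdim₁, hq₁, e⟩ := exists_hypPlane_prod_equivalent f hK hq hx (hI x hxI)
    obtain ⟨J, hJ, hJI⟩ := hI.exists_equivalent
      (Q' := (q₁.c.map f).toQuadraticForm'.prod (hypPlane : QF K).form)
      (e.symm.trans (prod_comm_equivalent _ _))
    obtain ⟨J', hJ', hJ'J⟩ :=
      exists_isTotallyIsotropic_of_prod isNonsingular_hypPlane hJ hasLagrangian_hypPlane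
    have finrank_hypPlane : finrank K (Fin (hypPlane : QF K).dim → K) = 2 :=
      Module.finrank_fin_fun K
    rw [hJI, finrank_hypPlane] at hJ'J
    obtain ⟨d, hdim, hd, hLag⟩ := ih hq₁ hJ' (by omega)
    refine ⟨d, by omega, hd, (hasLagrangian_hypPlane.prod hLag).equivalent ?_⟩
    exact (prod_assoc_equivalent _ _ _).symm.trans (e.prod (.refl _))

theorem hyperbolic_of_hasLagrangian {q : QF K} (hq : IsNonsingular q.form)
    (h : HasLagrangian q.form) : q.Hyperbolic := by
  induction hn : q.dim using Nat.strong_induction_on generalizing q with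
  | _ n ih =>
  obtain rfl | hn₀ := n.eq_zero_or_pos
  · obtain ⟨m, c⟩ := q
    subst hn
    exact ⟨0, LinearEquiv.refl K (Fin 0 → K), fun x ↦ rfl⟩
  obtain ⟨I, hI, hdim⟩ := id h
  rw [Module.finrank_fin_fun] at hdim
  obtain ⟨x, hxI, hx⟩ := I.exists_mem_ne_zero_of_ne_bot (by rintro rfl; simp at hdim; omega)
  obtain ⟨d, hdim', hd, e⟩ := exists_hypPlane_prod_equivalent (RingHom.id K)
    (fun x ↦ ⟨x ^ 2, rfl⟩) hq hx (by simpa using hI x hxI)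
  simp only [RingHom.coe_id, Matrix.map_id] at e
  have hdLag : HasLagrangian d.form :=
    .of_prod isNonsingular_hypPlane
      (h.equivalent (e.symm.trans (prod_comm_equivalent _ _)))
      hasLagrangian_hypPlane
  obtain ⟨k, hk⟩ := ih d.dim (by omega) hd hdLag rfl
  refine ⟨k + 1, isometric_iff.2 (e.symm.trans ?_)⟩
  exact ((QuadraticMap.Equivalent.refl _).prod (isometric_iff.1 hk)).trans
    (orthSum_equivalent hypPlane (hyp k))

theorem hyperbolic_iff_hasLagrangian {q : QF K} (hq : IsNonsingular q.form) :
    q.Hyperbolic ↔ HasLagrangian q.form := by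
  refine ⟨fun ⟨k, hk⟩ ↦ ?_, hyperbolic_of_hasLagrangian hq⟩
  exact (isNonsingular_hyp_and_hasLagrangian k).2.equivalent (isometric_iff.1 hk).symm

end Hyperbolic

section WittExtension

variable {E V : Type*} [Field E] [AddCommGroup V] [Module E V] {Q : QuadraticForm E V}

/-- The isometry is the reflection in `x - y`. -/
theorem exists_isometry_apply_eq_of_anisotropic (hQ : Q.Anisotropic) {x y : V} (h : Q x = Q y) :
    ∃ s : Q →qᵢ Q, s x = y ∧ ∀ v, polar Q v x = polar Q v y → s v = v := by
  by_cases hxy : x - y = 0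
  · exact ⟨.id Q, sub_eq_zero.1 hxy, fun _ _ ↦ rfl⟩
  have hQxy : Q (x - y) ≠ 0 := fun h ↦ hxy (hQ _ h)
  let s : V →ₗ[E] V := LinearMap.id -
    ((Q (x - y))⁻¹ • polarBilin Q (x - y)).smulRight (x - y)
  have hs (v : V) : s v = v - ((Q (x - y))⁻¹ * polar Q (x - y) v) • (x - y) := rfl
  refine ⟨⟨s, fun v ↦ ?_⟩, ?_, fun v hv ↦ ?_⟩
  · change Q (s v) = Q v
    rw [hs, sub_eq_add_neg, ← neg_smul, QuadraticMap.map_add Q, QuadraticMap.map_smul,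
      QuadraticMap.polar_smul_right, QuadraticMap.polar_comm Q v]
    simp only [smul_eq_mul]
    field_simp
    ring
  · have polar_sub_self : polar Q (x - y) x = Q (x - y) := by
      rw [QuadraticMap.polar_sub_left, QuadraticMap.polar_self, sub_eq_add_neg x y,
        QuadraticMap.map_add Q, QuadraticMap.map_neg, QuadraticMap.polar_neg_right,
        QuadraticMap.polar_comm Q y x, ← h, two_nsmul, sub_eq_add_neg]
    change s x = y
    rw [hs, polar_sub_self, inv_mul_cancel₀ hQxy, one_smul, sub_sub_cancel]
  · change s v = v
    rw [hs, QuadraticMap.polar_comm, QuadraticMap.polar_sub_right, hv, sub_self, mul_zero,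
      zero_smul, sub_zero]

theorem exists_isometry_extending (hQ : Q.Anisotropic) {ι : Type*} [Finite ι] {σ τ : ι → V}
    (h : SameGram Q σ Q τ) : ∃ g : Q →qᵢ Q, ∀ i, g (σ i) = τ i := by
  classical
  have := Fintype.ofFinite ι
  suffices ∀ S : Finset ι, ∃ g : Q →qᵢ Q, ∀ i ∈ S, g (σ i) = τ i by
    simpa using this Finset.univ
  intro S
  induction S using Finset.induction_on with
  | empty => exact ⟨.id Q, by simp⟩
  | insert a S _ ih =>
    obtain ⟨g, hg⟩ := ih
    obtain ⟨s, hsa, hs⟩ := exists_isometry_apply_eq_of_anisotropic hQ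
      (x := g (σ a)) (y := τ a) (by rw [g.map_app, h.1])
    refine ⟨s.comp g, fun i hi ↦ ?_⟩
    obtain rfl | hi := Finset.mem_insert.1 hi
    · exact hsa
    · exact (congrArg s (hg i hi)).trans
        (hs _ (by rw [← hg i hi, polar_isometry, h.2, hg i hi]))

end WittExtension

section CasselsPfister

open Polynomial

variable {K : Type*} [Field K] {ι : Type*} [Fintype ι] [DecidableEq ι] {c : Matrix ι ι K}

theorem coeff_toQuadraticForm'_map_C (c : Matrix ι ι K) {p : ι → K[X]} {D : ℕ}
    (hp : ∀ i, (p i).natDegree ≤ D) :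
    ((c.map C).toQuadraticForm' p).coeff (D + D) = c.toQuadraticForm' fun i ↦ (p i).coeff D := by
  simp only [toQuadraticForm'_apply, finsetSum_coeff, Matrix.map_apply, mul_assoc, coeff_C_mul,
    coeff_mul_add_eq_of_natDegree_le (hp _) (hp _)]

theorem natDegree_toQuadraticForm'_map_C_le (c : Matrix ι ι K) {p : ι → K[X]} {D : ℕ}
    (hp : ∀ i, (p i).natDegree ≤ D) : ((c.map C).toQuadraticForm' p).natDegree ≤ D + D := by
  rw [toQuadraticForm'_apply]
  refine natDegree_sum_le_of_forall_le _ _ fun i _ ↦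
    natDegree_sum_le_of_forall_le _ _ fun j _ ↦ ?_
  rw [Matrix.map_apply, mul_assoc]
  exact (natDegree_C_mul_le _ _).trans (natDegree_mul_le.trans (add_le_add (hp i) (hp j)))

theorem coeff_polar_map_C (c : Matrix ι ι K) {p r : ι → K[X]} {D : ℕ}
    (hp : ∀ i, (p i).natDegree ≤ D) (hr : ∀ i, (r i).natDegree ≤ D) :
    (polar (c.map C).toQuadraticForm' p r).coeff (D + D) =
      polar c.toQuadraticForm' (fun i ↦ (p i).coeff D) fun i ↦ (r i).coeff D := by
  have hpr (i : ι) : ((p + r) i).natDegree ≤ D :=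
    (natDegree_add_le _ _).trans (max_le (hp i) (hr i))
  simp only [polar, coeff_sub, coeff_toQuadraticForm'_map_C c hp,
    coeff_toQuadraticForm'_map_C c hr, coeff_toQuadraticForm'_map_C c hpr]
  congr 3

theorem natDegree_polar_comp_C_le (c : Matrix ι ι K) {p : ι → K[X]} {D : ℕ}
    (hp : ∀ i, (p i).natDegree ≤ D) (u : ι → K) :
    (polar (c.map C).toQuadraticForm' p (C ∘ u)).natDegree ≤ D := by
  rw [QuadraticMap.polar_comm, polar_toQuadraticForm', dotProduct]
  refine natDegree_sum_le_of_forall_le _ _ fun i _ ↦ (natDegree_C_mul_le _ _).trans ?_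
  refine natDegree_sum_le_of_forall_le _ _ fun j _ ↦ ?_
  have hij : (c.map C + (c.map C).transpose) i j = C (c i j + c j i) := by simp
  change ((c.map C + (c.map C).transpose) i j * p j).natDegree ≤ D
  rw [hij]
  exact (natDegree_C_mul_le _ _).trans (hp j)

theorem natDegree_le_of_anisotropic (hc : c.toQuadraticForm'.Anisotropic) {p : ι → K[X]} {D : ℕ}
    (h : ((c.map C).toQuadraticForm' p).natDegree ≤ D + D) (i : ι) : (p i).natDegree ≤ D := by
  obtain ⟨j, -, hj⟩ :=
    Finset.univ.exists_max_image (fun i ↦ (p i).natDegree) ⟨i, Finset.mem_univ i⟩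
  by_contra! hlt
  have hij := hj i (Finset.mem_univ i)
  have leading := coeff_toQuadraticForm'_map_C c fun k ↦ hj k (Finset.mem_univ k)
  rw [coeff_eq_zero_of_natDegree_lt (by omega)] at leading
  have hpj : (p j).leadingCoeff = 0 := congrFun (hc _ leading.symm) j
  rw [leadingCoeff_eq_zero.1 hpj, natDegree_zero] at hij
  omega

theorem anisotropic_map_C (hc : c.toQuadraticForm'.Anisotropic) :
    (c.map C).toQuadraticForm'.Anisotropic := by
  intro p hp
  have hdeg := natDegree_le_of_anisotropic hc (p := p) (D := 0) (by simp [hp])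
  have hcoeff := coeff_toQuadraticForm'_map_C c hdeg
  rw [hp, coeff_zero] at hcoeff
  ext1 i
  rw [eq_C_of_natDegree_le_zero (hdeg i), congrFun (hc _ hcoeff.symm) i, Pi.zero_apply, C_0,
    Pi.zero_apply]

/-- The vector `s + (Q(s) - e) h⁻¹ r` is the second point of the quadric `Q = e` on the line
through its point `s + g⁻¹ r` in the direction `r`. -/
theorem apply_smul_add_sub_smul {R V : Type*} [CommRing R] [AddCommGroup V] [Module R V]
    {Q : QuadraticForm R V} {s r : V} {e g h : R} (hr : Q r = g * h)
    (hsr : polar Q s r = e * g - g * Q s - h) :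
    Q (h • s + (Q s - e) • r) = e * h ^ 2 := by
  rw [QuadraticMap.map_add Q, QuadraticMap.map_smul, QuadraticMap.map_smul,
    QuadraticMap.polar_smul_left, QuadraticMap.polar_smul_right, hr]
  simp only [smul_eq_mul]
  linear_combination (h * (Q s - e)) * hsr

/-- The new denominator `h` comes from the second point of the quadric `Q = e` on the line through
`f / g` and `s`, where `f = g s + r` is division with remainder. -/
theorem exists_natDegree_lt_of_not_dvd (hc : c.toQuadraticForm'.Anisotropic) {J : Type*}
    {u : J → ι → K} {e : K[X]} {l : J → K[X]} {g : K[X]} {f : ι → K[X]} (hg : g ≠ 0)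
    (hQ : (c.map C).toQuadraticForm' f = e * g ^ 2)
    (hB : ∀ j, polar (c.map C).toQuadraticForm' f (C ∘ u j) = l j * g) (hgf : ¬ ∀ i, g ∣ f i) :
    ∃ (h : K[X]) (f' : ι → K[X]), h ≠ 0 ∧ h.natDegree < g.natDegree ∧
      (c.map C).toQuadraticForm' f' = e * h ^ 2 ∧
      ∀ j, polar (c.map C).toQuadraticForm' f' (C ∘ u j) = l j * h := by
  set Q := (c.map C).toQuadraticForm' with hQdef
  let s : ι → K[X] := fun i ↦ f i / g
  let r : ι → K[X] := fun i ↦ f i % g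
  have hf : f = g • s + r := funext fun i ↦ (EuclideanDomain.div_add_mod (f i) g).symm
  have hg₀ : g.natDegree ≠ 0 := fun h₀ ↦ hgf fun i ↦
    (isUnit_iff_degree_eq_zero.2 ((degree_eq_iff_natDegree_eq hg).2 h₀)).dvd
  have hr : r ≠ 0 := fun h₀ ↦ hgf fun i ↦ EuclideanDomain.mod_eq_zero.1 (congrFun h₀ i)
  have hrdeg (i : ι) : (r i).natDegree ≤ g.natDegree - 1 :=
    Nat.le_sub_one_of_lt (natDegree_mod_lt (f i) hg₀)
  have hfu (j : J) : g * polar Q s (C ∘ u j) + polar Q r (C ∘ u j) = l j * g := by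
    rw [← hB, hf, QuadraticMap.polar_add_left, QuadraticMap.polar_smul_left, smul_eq_mul]
  have hru (j : J) : polar Q r (C ∘ u j) = 0 := by
    have hdvd : g ∣ polar Q r (C ∘ u j) :=
      ⟨l j - polar Q s (C ∘ u j), by linear_combination hfu j⟩
    exact eq_zero_of_dvd_of_natDegree_lt hdvd
      ((natDegree_polar_comp_C_le c hrdeg (u j)).trans_lt (by omega))
  have hsu (j : J) : polar Q s (C ∘ u j) = l j :=
    mul_left_cancel₀ hg (by linear_combination hfu j - hru j)
  let h : K[X] := e * g - g * Q s - polar Q s r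
  have hQr : Q r = g * h := by
    rw [hf, QuadraticMap.map_add Q, QuadraticMap.map_smul, QuadraticMap.polar_smul_left] at hQ
    simp only [smul_eq_mul] at hQ
    linear_combination hQ
  have hsr : polar Q s r = e * g - g * Q s - h := by
    simp only [h]
    ring
  have hh : h ≠ 0 := fun h₀ ↦ hr (anisotropic_map_C hc _ (by rw [← hQdef, hQr, h₀, mul_zero]))
  have hhdeg : h.natDegree < g.natDegree := by
    have := natDegree_toQuadraticForm'_map_C_le c hrdeg
    rw [← hQdef, hQr, natDegree_mul hg hh] at this
    omega
  refine ⟨h, h • s + (Q s - e) • r, hh, hhdeg, apply_smul_add_sub_smul hQr hsr, fun j ↦ ?_⟩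
  rw [QuadraticMap.polar_add_left, QuadraticMap.polar_smul_left, QuadraticMap.polar_smul_left,
    hru, hsu, smul_zero, add_zero, smul_eq_mul, mul_comm]

/-- The Cassels–Pfister theorem, for the intersection of a quadric with hyperplanes. -/
theorem cassels_pfister (hc : c.toQuadraticForm'.Anisotropic) {J : Type*}
    {u : J → ι → K} {e : K[X]} {l : J → K[X]} {g : K[X]} {f : ι → K[X]} (hg : g ≠ 0)
    (hQ : (c.map C).toQuadraticForm' f = e * g ^ 2)
    (hB : ∀ j, polar (c.map C).toQuadraticForm' f (C ∘ u j) = l j * g) :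
    ∃ p : ι → K[X], (c.map C).toQuadraticForm' p = e ∧
      ∀ j, polar (c.map C).toQuadraticForm' p (C ∘ u j) = l j := by
  induction hD : g.natDegree using Nat.strong_induction_on generalizing g f with
  | _ D ih =>
  by_cases hgf : ∀ i, g ∣ f i
  · choose s hs using hgf
    obtain rfl : f = g • s := funext hs
    rw [QuadraticMap.map_smul, smul_eq_mul] at hQ
    refine ⟨s, mul_left_cancel₀ (mul_ne_zero hg hg) (by linear_combination hQ), fun j ↦ ?_⟩
    have := hB j
    rw [QuadraticMap.polar_smul_left, smul_eq_mul] at this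
    exact mul_left_cancel₀ hg (by linear_combination this)
  · obtain ⟨h, f', hh, hdeg, hQ', hB'⟩ := exists_natDegree_lt_of_not_dvd hc hg hQ hB hgf
    exact ih _ (hD ▸ hdeg) hh hQ' hB' rfl

end CasselsPfister

section RatFunc

open Polynomial

variable {K : Type*} [Field K] {ι : Type*} [Fintype ι] [DecidableEq ι] {c : Matrix ι ι K}

theorem map_algebraMap_ratFunc {ι : Type*} (c : Matrix ι ι K) :
    c.map (algebraMap K (RatFunc K)) = (c.map C).map (algebraMap K[X] (RatFunc K)) := by
  ext i j
  simp

theorem toQuadraticForm'_ratFunc (c : Matrix ι ι K) (p : ι → K[X]) :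
    (c.map (algebraMap K (RatFunc K))).toQuadraticForm' (algebraMap K[X] (RatFunc K) ∘ p) =
      algebraMap K[X] (RatFunc K) ((c.map C).toQuadraticForm' p) := by
  rw [map_algebraMap_ratFunc, toQuadraticForm'_map]

theorem polar_ratFunc (c : Matrix ι ι K) (p r : ι → K[X]) :
    polar (c.map (algebraMap K (RatFunc K))).toQuadraticForm' (algebraMap K[X] (RatFunc K) ∘ p)
        (algebraMap K[X] (RatFunc K) ∘ r) =
      algebraMap K[X] (RatFunc K) (polar (c.map C).toQuadraticForm' p r) := by
  rw [map_algebraMap_ratFunc, polar_map]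

theorem exists_common_denominator {J : Type*} [Finite J] {ι : Type*} [Finite ι]
    (σ : J → ι → RatFunc K) :
    ∃ (g : K[X]) (p : J → ι → K[X]), g ≠ 0 ∧
      ∀ j, algebraMap K[X] (RatFunc K) g • σ j = algebraMap K[X] (RatFunc K) ∘ p j := by
  obtain ⟨g, hg⟩ := IsLocalization.exist_integer_multiples_of_finite (nonZeroDivisors K[X])
    fun ji : J × ι ↦ σ ji.1 ji.2
  choose p hp using hg
  refine ⟨g, fun j i ↦ p (j, i), nonZeroDivisors.ne_zero g.2, fun j ↦ ?_⟩
  ext1 i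
  exact ((hp (j, i)).trans (Algebra.smul_def _ _)).symm

theorem anisotropic_map_ratFunc (hc : c.toQuadraticForm'.Anisotropic) :
    (c.map (algebraMap K (RatFunc K))).toQuadraticForm'.Anisotropic := by
  intro x hx
  obtain ⟨g, p, hg, hp⟩ := exists_common_denominator fun _ : Unit ↦ x
  have hQ : (c.map C).toQuadraticForm' (p ()) = 0 := by
    apply RatFunc.algebraMap_injective K
    rw [← toQuadraticForm'_ratFunc, ← hp, QuadraticMap.map_smul, hx, smul_zero, map_zero]
  refine (smul_eq_zero.1 ?_).resolve_left (RatFunc.algebraMap_ne_zero hg)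
  rw [hp (), anisotropic_map_C hc _ hQ]
  ext i
  simp

/-- The vectors `τ j` consist of the leading coefficients of the `σ j` at infinity. -/
theorem exists_specialization (hc : c.toQuadraticForm'.Anisotropic) {J : Type*} [Finite J]
    {κ : Type*} [Fintype κ] [DecidableEq κ] {d : Matrix κ κ K} {σ : J → ι → RatFunc K}
    {e : J → κ → K}
    (h : SameGram (c.map (algebraMap K (RatFunc K))).toQuadraticForm' σ
      (d.map (algebraMap K (RatFunc K))).toQuadraticForm' fun j ↦ algebraMap K (RatFunc K) ∘ e j) :
    ∃ τ : J → ι → K, SameGram c.toQuadraticForm' τ d.toQuadraticForm' e := by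
  obtain ⟨g, p, hg, hp⟩ := exists_common_denominator σ
  have hQ (j : J) : (c.map C).toQuadraticForm' (p j) =
      C (d.toQuadraticForm' (e j)) * (g * g) := by
    apply RatFunc.algebraMap_injective K
    rw [← toQuadraticForm'_ratFunc, ← hp, QuadraticMap.map_smul, h.1, toQuadraticForm'_map,
      smul_eq_mul, map_mul, map_mul, RatFunc.algebraMap_C, RatFunc.algebraMap_eq_C, mul_comm]
  have hP (i j : J) : polar (c.map C).toQuadraticForm' (p i) (p j) =
      C (polar d.toQuadraticForm' (e i) (e j)) * (g * g) := by
    apply RatFunc.algebraMap_injective K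
    rw [← polar_ratFunc, ← hp, ← hp, QuadraticMap.polar_smul_left, QuadraticMap.polar_smul_right,
      h.2, polar_map, smul_eq_mul, smul_eq_mul, map_mul, map_mul, RatFunc.algebraMap_C,
      RatFunc.algebraMap_eq_C]
    ring
  have hdeg (j : J) : ∀ i, (p j i).natDegree ≤ g.natDegree :=
    natDegree_le_of_anisotropic hc (by
      rw [hQ]
      exact (natDegree_C_mul_le _ _).trans natDegree_mul_le)
  have hlead : g.leadingCoeff ≠ 0 := leadingCoeff_ne_zero.2 hg
  have coeff_C_mul_sq (a : K) : (C a * (g * g)).coeff (g.natDegree + g.natDegree) =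
      a * (g.leadingCoeff * g.leadingCoeff) := by
    rw [coeff_C_mul, coeff_mul_degree_add_degree]
  refine ⟨fun j ↦ g.leadingCoeff⁻¹ • fun i ↦ (p j i).coeff g.natDegree, fun j ↦ ?_, fun i j ↦ ?_⟩
  · rw [QuadraticMap.map_smul, ← coeff_toQuadraticForm'_map_C c (hdeg j), hQ, coeff_C_mul_sq,
      smul_eq_mul]
    field_simp
  · rw [QuadraticMap.polar_smul_left, QuadraticMap.polar_smul_right,
      ← coeff_polar_map_C c (hdeg i) (hdeg j), hP, coeff_C_mul_sq, smul_eq_mul, smul_eq_mul]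
    field_simp

end RatFunc

section GenericValues

open Polynomial

variable {K : Type*} [Field K] {ι κ : Type*}

theorem exists_eq_affine {p : ι → K[X]} (hp : ∀ i, (p i).natDegree ≤ 1) :
    ∃ u v : ι → K, p = C ∘ u + (X : K[X]) • (C ∘ v) := by
  refine ⟨fun i ↦ (p i).coeff 0, fun i ↦ (p i).coeff 1, funext fun i ↦ ?_⟩
  conv_lhs => rw [eq_X_add_C_of_natDegree_le_one (hp i)]
  simp only [Pi.add_apply, Pi.smul_apply, Function.comp_apply, smul_eq_mul]
  ring

theorem natDegree_affine_le (u v : ι → K) (i : ι) :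
    ((C ∘ u + (X : K[X]) • (C ∘ v)) i).natDegree ≤ 1 := by
  simp only [Pi.add_apply, Pi.smul_apply, Function.comp_apply, smul_eq_mul]
  compute_degree

theorem algebraMap_comp_affine (u v : ι → K) :
    algebraMap K[X] (RatFunc K) ∘ (C ∘ u + (X : K[X]) • (C ∘ v)) =
      algebraMap K (RatFunc K) ∘ u + (RatFunc.X : RatFunc K) • (algebraMap K (RatFunc K) ∘ v) := by
  ext i
  simp only [Function.comp_apply, Pi.add_apply, Pi.smul_apply, smul_eq_mul, map_add, map_mul,
    RatFunc.algebraMap_C, RatFunc.algebraMap_X, RatFunc.algebraMap_eq_C]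

variable [Fintype ι] [DecidableEq ι] [Fintype κ] [DecidableEq κ]

theorem toQuadraticForm'_affine (c : Matrix ι ι K) (u v : ι → K) :
    (c.map C).toQuadraticForm' (C ∘ u + (X : K[X]) • (C ∘ v)) =
      C (c.toQuadraticForm' v) * X ^ 2 + C (polar c.toQuadraticForm' u v) * X +
        C (c.toQuadraticForm' u) := by
  rw [QuadraticMap.map_add (c.map C).toQuadraticForm', QuadraticMap.map_smul,
    QuadraticMap.polar_smul_right, toQuadraticForm'_map, toQuadraticForm'_map, polar_map]
  simp only [smul_eq_mul]
  ring

theorem polar_affine (c : Matrix ι ι K) (u v w : ι → K) :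
    polar (c.map C).toQuadraticForm' (C ∘ u + (X : K[X]) • (C ∘ v)) (C ∘ w) =
      C (polar c.toQuadraticForm' v w) * X + C (polar c.toQuadraticForm' u w) := by
  rw [QuadraticMap.polar_add_left, QuadraticMap.polar_smul_left, polar_map, polar_map, smul_eq_mul]
  ring

theorem sameGram_of_affine {c : Matrix ι ι K} {d : Matrix κ κ K} {n : ℕ} {p q : ι → K}
    {u v : κ → K} {τ : Fin n → ι → K} {e : Fin n → κ → K}
    (hτ : SameGram c.toQuadraticForm' τ d.toQuadraticForm' e)
    (hpq : (c.map C).toQuadraticForm' (C ∘ p + (X : K[X]) • (C ∘ q)) =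
      (d.map C).toQuadraticForm' (C ∘ u + (X : K[X]) • (C ∘ v)))
    (hpqτ : ∀ j, polar (c.map C).toQuadraticForm' (C ∘ p + (X : K[X]) • (C ∘ q)) (C ∘ τ j) =
      polar (d.map C).toQuadraticForm' (C ∘ u + (X : K[X]) • (C ∘ v)) (C ∘ e j)) :
    SameGram c.toQuadraticForm'
      (Fin.cons p (Fin.cons q τ : Fin (n + 1) → ι → K) : Fin (n + 2) → ι → K)
      d.toQuadraticForm' (Fin.cons u (Fin.cons v e : Fin (n + 1) → κ → K)) := by
  simp only [toQuadraticForm'_affine, polar_affine] at hpq hpqτ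
  have hcoeff (k : ℕ) := congrArg (coeff · k) hpq
  have hcoeffτ (k : ℕ) (j : Fin n) := congrArg (coeff · k) (hpqτ j)
  refine sameGram_cons.2 ⟨?_, Fin.cases ?_ fun j ↦ ?_, sameGram_cons.2 ⟨?_, fun j ↦ ?_, hτ⟩⟩
  · simpa using hcoeff 0
  · simpa [coeff_X, coeff_C] using hcoeff 2
  · simpa [coeff_X, coeff_C] using hcoeffτ 1 j
  · simpa [coeff_X, coeff_C] using hcoeff 1
  · simpa using hcoeffτ 0 j

/-- The first vector of the given family is moved into `K[X]` by the Cassels–Pfister theorem, after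
an isometry over `K(X)` has made the other vectors constant. -/
theorem exists_sameGram_of_ratFunc {c : Matrix ι ι K} (hc : c.toQuadraticForm'.Anisotropic)
    (d : Matrix κ κ K) {n : ℕ} {u v : κ → K} {e : Fin n → κ → K}
    {σ : Fin (n + 1) → ι → RatFunc K}
    (h : SameGram (c.map (algebraMap K (RatFunc K))).toQuadraticForm' σ
      (d.map (algebraMap K (RatFunc K))).toQuadraticForm'
      (Fin.cons (algebraMap K (RatFunc K) ∘ u +
          (RatFunc.X : RatFunc K) • (algebraMap K (RatFunc K) ∘ v))
        fun j ↦ algebraMap K (RatFunc K) ∘ e j : Fin (n + 1) → κ → RatFunc K)) :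
    ∃ τ : Fin (n + 2) → ι → K, SameGram c.toQuadraticForm' τ d.toQuadraticForm'
      (Fin.cons u (Fin.cons v e : Fin (n + 1) → κ → K) : Fin (n + 2) → κ → K) := by
  obtain ⟨s, σ, rfl⟩ : ∃ s σ', σ = Fin.cons s σ' := ⟨σ 0, Fin.tail σ, (Fin.cons_self_tail σ).symm⟩
  obtain ⟨hs, hsσ, hσ⟩ := sameGram_cons.1 h
  obtain ⟨τ, hτ⟩ := exists_specialization hc hσ
  obtain ⟨g, hg⟩ := exists_isometry_extending (anisotropic_map_ratFunc hc)
    (hσ.trans (hτ.map (algebraMap K (RatFunc K))).symm)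
  obtain ⟨b, f, hb, hf⟩ := exists_common_denominator fun _ : Unit ↦ g s
  rw [← algebraMap_comp_affine] at hs hsσ
  obtain ⟨P, hP, hPτ⟩ := cassels_pfister hc hb
    (e := (d.map C).toQuadraticForm' (C ∘ u + (X : K[X]) • (C ∘ v)))
    (l := fun j ↦ polar (d.map C).toQuadraticForm' (C ∘ u + (X : K[X]) • (C ∘ v)) (C ∘ e j))
    (f := f ()) (u := τ)
    (RatFunc.algebraMap_injective K (by
      rw [← toQuadraticForm'_ratFunc, ← hf, QuadraticMap.map_smul, g.map_app, hs,
        toQuadraticForm'_ratFunc, smul_eq_mul, map_mul, map_pow]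
      ring))
    fun j ↦ RatFunc.algebraMap_injective K (by
      have hgσ : algebraMap K[X] (RatFunc K) ∘ (C ∘ τ j) = g (σ j) := (hg j).symm
      rw [← polar_ratFunc, ← hf, hgσ, QuadraticMap.polar_smul_left, polar_isometry, hsσ, map_mul,
        ← polar_ratFunc, smul_eq_mul, mul_comm]
      rfl)
  have hPdeg (i : ι) : (P i).natDegree ≤ 1 := natDegree_le_of_anisotropic hc (by
    rw [hP]
    exact natDegree_toQuadraticForm'_map_C_le d (natDegree_affine_le u v)) i
  obtain ⟨p, q, rfl⟩ := exists_eq_affine hPdeg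
  exact ⟨_, sameGram_of_affine hτ hP hPτ⟩

/-- `GenericPoint f x`: the coordinates of `x` are algebraically independent over `f K`. -/
def GenericPoint {M : Type*} [Field M] {σ : Type*} (f : K →+* M) (x : σ → M) : Prop :=
  Function.Injective (MvPolynomial.eval₂Hom f x)

theorem GenericPoint.cons {M : Type*} [Field M] {n : ℕ} {f : RatFunc K →+* M} {x : Fin n → M}
    (h : GenericPoint f x) :
    GenericPoint (f.comp (algebraMap K (RatFunc K)))
      (Fin.cons (f RatFunc.X) x : Fin (n + 1) → M) := by
  have hcomp : MvPolynomial.eval₂Hom (f.comp (algebraMap K (RatFunc K)))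
      (Fin.cons (f RatFunc.X) x : Fin (n + 1) → M) =
      ((MvPolynomial.eval₂Hom f x).comp
        (MvPolynomial.map (algebraMap K[X] (RatFunc K)))).comp
        ((MvPolynomial.optionEquivRight K (Fin n)).toRingEquiv.toRingHom.comp
          (MvPolynomial.renameEquiv K (finSuccEquiv n)).toRingEquiv.toRingHom) := by
    refine MvPolynomial.ringHom_ext (fun r ↦ ?_) (Fin.cases ?_ fun i ↦ ?_)
    · simp
    · simp
    · simp
  rw [GenericPoint, hcomp]
  simp only [RingHom.coe_comp]
  exact (h.comp (MvPolynomial.map_injective _ (RatFunc.algebraMap_injective K))).comp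
    ((MvPolynomial.optionEquivRight K (Fin n)).injective.comp
      (MvPolynomial.renameEquiv K (finSuccEquiv n)).injective)

theorem genericPoint_of_isEmpty {M : Type*} [Field M] {σ : Type*} [IsEmpty σ] (f : K →+* M)
    (x : σ → M) : GenericPoint f x := by
  refine (injective_iff_map_eq_zero _).2 fun p hp ↦ ?_
  rw [MvPolynomial.eq_C_of_isEmpty p] at hp ⊢
  simpa using hp

end GenericValues

/-- The Cassels–Pfister subform theorem, for the subform spanned by the vectors `e`. -/
theorem exists_sameGram_of_genericPoint.{u} {ι κ : Type*} [Fintype ι] [DecidableEq ι] [Fintype κ]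
    [DecidableEq κ] {n : ℕ} {K : Type u} [Field K] {c : Matrix ι ι K} (d : Matrix κ κ K)
    (e : Fin (n + 1) → κ → K) (hc : c.toQuadraticForm'.Anisotropic)
    (h : ∀ (M : Type u) [Field M] (f : K →+* M) (x : Fin n → M),
      (c.map f).toQuadraticForm'.Anisotropic → GenericPoint f x →
      ∃ w, (c.map f).toQuadraticForm' w =
        (d.map f).toQuadraticForm' (f ∘ e 0 + ∑ i, x i • (f ∘ e i.succ))) :
    ∃ σ : Fin (n + 1) → ι → K, SameGram c.toQuadraticForm' σ d.toQuadraticForm' e := by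
  induction n generalizing K with
  | zero =>
    obtain ⟨w, hw⟩ := h K (.id K) ![] (by simpa using hc) (genericPoint_of_isEmpty _ _)
    have hw : c.toQuadraticForm' w = d.toQuadraticForm' (e 0) := by simpa using hw
    exact ⟨fun _ ↦ w, by simp [SameGram, Fin.forall_fin_one, hw]⟩
  | succ n ih =>
    obtain ⟨u, v, e, rfl⟩ : ∃ u v e', e = Fin.cons u (Fin.cons v e' : Fin (n + 1) → κ → K) :=
      ⟨e 0, e 1, fun j ↦ e j.succ.succ, by
        ext j : 1
        refine Fin.cases rfl (Fin.cases rfl fun j ↦ rfl) j⟩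
    obtain ⟨σ, hσ⟩ := ih (d.map (algebraMap K (RatFunc K)))
      (Fin.cons (algebraMap K (RatFunc K) ∘ u +
          (RatFunc.X : RatFunc K) • (algebraMap K (RatFunc K) ∘ v))
        fun j ↦ algebraMap K (RatFunc K) ∘ e j)
      (anisotropic_map_ratFunc hc) fun M _ f x hM hx ↦ by
        obtain ⟨w, hw⟩ := h M (f.comp (algebraMap K (RatFunc K))) _ hM hx.cons
        refine ⟨w, hw.trans (congrArg _ ?_)⟩
        ext k
        simp [Fin.sum_univ_succ, add_assoc]
    exact exists_sameGram_of_ratFunc hc d hσ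

section FunctionField

variable {R S : Type*} [CommRing R] [CommRing S] {ι : Type*} [DecidableEq ι]

/-- The form with matrix `c` is `X₀² + X₀X₁` plus a form not involving `X₀`, where `X₀` and `X₁` are
the coordinates `i₀` and `i₁`. -/
structure IsArtinSchreierAt (c : Matrix ι ι R) (i₀ i₁ : ι) : Prop where
  ne : i₁ ≠ i₀
  row : c i₀ = Pi.single i₀ 1 + Pi.single i₁ 1
  col : ∀ j ≠ i₀, c j i₀ = 0

namespace IsArtinSchreierAt

variable {c : Matrix ι ι R} {i₀ i₁ : ι}

theorem map (h : IsArtinSchreierAt c i₀ i₁) (f : R →+* S) :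
    IsArtinSchreierAt (c.map f) i₀ i₁ where
  ne := h.ne
  row := by
    ext j
    simp [h.row, Pi.single_apply, apply_ite f]
  col j hj := by rw [Matrix.map_apply, h.col j hj, map_zero]

theorem toQuadraticForm'_eq [Fintype ι] (h : IsArtinSchreierAt c i₀ i₁) (x : ι → R) :
    c.toQuadraticForm' x =
      x i₀ ^ 2 + x i₀ * x i₁ + c.toQuadraticForm' (Function.update x i₀ 0) := by
  set x' := Function.update x i₀ 0
  have hx : x = x i₀ • Pi.single i₀ 1 + x' := by
    ext j
    by_cases hj : j = i₀
    · simp [x', hj]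
    · simp [x', hj]
  have value : c.toQuadraticForm' (Pi.single i₀ 1) = 1 := by
    simp [toQuadraticForm'_apply, Pi.single_apply, h.row, h.ne.symm]
  have product : polar c.toQuadraticForm' (Pi.single i₀ 1) x' = x i₁ := by
    have column : ∑ j, c j i₀ * x' j = 0 := Finset.sum_eq_zero fun j _ ↦ by
      by_cases hj : j = i₀
      · simp [x', hj]
      · rw [h.col j hj, zero_mul]
    simp [polar_toQuadraticForm', Matrix.mulVec, dotProduct, column, h.row,
      add_mul, Finset.sum_add_distrib, Pi.single_apply, x', h.ne]
  conv_lhs => rw [hx]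
  rw [QuadraticMap.map_add c.toQuadraticForm', QuadraticMap.map_smul,
    QuadraticMap.polar_smul_left, value, product, smul_eq_mul, smul_eq_mul]
  ring

theorem isIntegralElem [Fintype ι] (h : IsArtinSchreierAt c i₀ i₁) (φ : R →+* S) {x : ι → R}
    {y : ι → S} (hxy : ∀ j ≠ i₀, φ (x j) = y j) (hy : (c.map φ).toQuadraticForm' y = 0) :
    φ.IsIntegralElem (y i₀) := by
  refine ⟨.X ^ 2 + .C (x i₁) * .X + .C (c.toQuadraticForm' (Function.update x i₀ 0)),
    by nontriviality R; monicity!, ?_⟩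
  have hupdate : φ ∘ Function.update x i₀ 0 = Function.update y i₀ 0 := by
    ext j
    by_cases hj : j = i₀
    · simp [hj]
    · simp [hj, hxy j hj]
  rw [(h.map φ).toQuadraticForm'_eq] at hy
  rw [Polynomial.eval₂_add, Polynomial.eval₂_add, Polynomial.eval₂_mul, Polynomial.eval₂_pow,
    Polynomial.eval₂_X, Polynomial.eval₂_C, Polynomial.eval₂_C, hxy i₁ h.ne,
    ← toQuadraticForm'_map, hupdate]
  linear_combination hy

end IsArtinSchreierAt

theorem eval₂Hom_toPoly {K : Type*} [Field K] (q : QF K) (f : K →+* R) (y : Fin q.dim → R) :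
    MvPolynomial.eval₂Hom f y q.toPoly = (q.c.map f).toQuadraticForm' y := by
  simp [toPoly, toQuadraticForm'_apply, mul_assoc]

variable {K : Type*} [Field K] {q : QF K} {i₀ i₁ : Fin q.dim}

theorem exists_coordRing_hom {M : Type*} [Field M] (f : K →+* M) {y : Fin q.dim → M}
    (hy : (q.c.map f).toQuadraticForm' y = 0) :
    ∃ ev : CoordRing q →+* M, ∀ p : MvPolynomial (Fin q.dim) K,
      ev (Ideal.Quotient.mk _ p) = MvPolynomial.eval₂Hom f y p := by
  refine ⟨Ideal.Quotient.lift _ (MvPolynomial.eval₂Hom f y) fun p hp ↦ ?_, fun p ↦ by simp⟩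
  suffices (Ideal.span {q.toPoly}).radical ≤ RingHom.ker (MvPolynomial.eval₂Hom f y) from this hp
  rw [(RingHom.ker_isPrime _).isRadical.radical_le_iff, Ideal.span_singleton_le_iff_mem,
    RingHom.mem_ker, eval₂Hom_toPoly, hy]

theorem toQuadraticForm'_coordRing_X (q : QF K) :
    (q.c.map (algebraMap K (CoordRing q))).toQuadraticForm'
      (fun i ↦ Ideal.Quotient.mk _ (MvPolynomial.X i)) = 0 := by
  have hmk : MvPolynomial.eval₂Hom (algebraMap K (CoordRing q))
      (fun i ↦ Ideal.Quotient.mk _ (MvPolynomial.X i)) =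
      Ideal.Quotient.mk (Ideal.span {q.toPoly}).radical := by
    refine MvPolynomial.ringHom_ext (fun a ↦ ?_) fun i ↦ ?_
    · rw [MvPolynomial.eval₂Hom_C]
      rfl
    · rw [MvPolynomial.eval₂Hom_X']
  rw [← eval₂Hom_toPoly, hmk, Ideal.Quotient.eq_zero_iff_mem]
  exact Ideal.le_radical (Ideal.mem_span_singleton_self _)

theorem isIntegral_coordRing (hq : IsArtinSchreierAt q.c i₀ i₁) :
    ((Ideal.Quotient.mk (Ideal.span {q.toPoly}).radical).comp
      (MvPolynomial.rename (Subtype.val : {j // j ≠ i₀} → Fin q.dim)).toRingHom).IsIntegral := by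
  set mk := Ideal.Quotient.mk (Ideal.span {q.toPoly}).radical
  set φ := mk.comp (MvPolynomial.rename (Subtype.val : {j // j ≠ i₀} → Fin q.dim)).toRingHom
  have hφC : (φ : _ → CoordRing q) ∘ MvPolynomial.C = algebraMap K (CoordRing q) := by
    ext a
    change mk (MvPolynomial.rename _ (MvPolynomial.C a)) = _
    rw [MvPolynomial.rename_C]
    rfl
  have hφX (j : {j // j ≠ i₀}) : φ (MvPolynomial.X j) = mk (MvPolynomial.X j) := by simp [φ]
  have integral_X : φ.IsIntegralElem (mk (MvPolynomial.X i₀)) := by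
    refine (hq.map MvPolynomial.C).isIntegralElem φ
      (x := fun j ↦ if hj : j ≠ i₀ then MvPolynomial.X ⟨j, hj⟩ else 0)
      (y := fun i ↦ mk (MvPolynomial.X i)) (fun j hj ↦ by simp [hj, hφX]) ?_
    rw [Matrix.map_map, hφC, toQuadraticForm'_coordRing_X]
  intro x
  obtain ⟨p, rfl⟩ := Ideal.Quotient.mk_surjective x
  induction p using MvPolynomial.induction_on with
  | C a => simpa [φ] using φ.isIntegralElem_map (x := MvPolynomial.C a)
  | add p r hp hr => exact map_add mk p r ▸ hp.add φ hr
  | mul_X p i hp =>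
    rw [map_mul]
    refine hp.mul φ ?_
    by_cases hi : i = i₀
    · exact hi ▸ integral_X
    · exact hφX ⟨i, hi⟩ ▸ φ.isIntegralElem_map

/-- Since the coordinate ring is integral over the polynomial ring in the coordinates other than
`i₀`, the kernel of evaluation at `y` vanishes as soon as its restriction to that ring does. -/
theorem exists_functionField_hom [IsDomain (CoordRing q)] (hq : IsArtinSchreierAt q.c i₀ i₁)
    {M : Type*} [Field M] (f : K →+* M) {y : Fin q.dim → M}
    (hgen : GenericPoint f fun j : {j // j ≠ i₀} ↦ y j)
    (hy : (q.c.map f).toQuadraticForm' y = 0) :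
    ∃ g : FunctionField q →+* M, g.comp (toFunctionField q) = f := by
  obtain ⟨ev, hev⟩ := exists_coordRing_hom f hy
  let φ := (Ideal.Quotient.mk (Ideal.span {q.toPoly}).radical).comp
    (MvPolynomial.rename (Subtype.val : {j // j ≠ i₀} → Fin q.dim)).toRingHom
  let _ : Algebra (MvPolynomial {j // j ≠ i₀} K) (CoordRing q) := φ.toAlgebra
  have : Algebra.IsIntegral (MvPolynomial {j // j ≠ i₀} K) (CoordRing q) :=
    ⟨isIntegral_coordRing hq⟩
  have hcomp : ev.comp φ = MvPolynomial.eval₂Hom f fun j : {j // j ≠ i₀} ↦ y j := by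
    refine MvPolynomial.ringHom_ext (fun a ↦ ?_) fun j ↦ ?_
    · simp [φ, hev]
    · simp [φ, hev]
  have hker : RingHom.ker ev = ⊥ := by
    refine Ideal.eq_bot_of_comap_eq_bot (R := MvPolynomial {j // j ≠ i₀} K) ?_
    change (RingHom.ker ev).comap φ = ⊥
    rw [RingHom.comap_ker, hcomp]
    exact (RingHom.injective_iff_ker_eq_bot _).1 hgen
  have hinj : Function.Injective ev := (RingHom.injective_iff_ker_eq_bot ev).2 hker
  refine ⟨IsFractionRing.lift hinj, ?_⟩
  ext a
  calc
    _ = ev (Ideal.Quotient.mk _ (MvPolynomial.C a)) := IsFractionRing.lift_algebraMap hinj _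
    _ = f a := by rw [hev, MvPolynomial.eval₂Hom_C]

theorem X_notMem_radical_span_toPoly (hq : IsArtinSchreierAt q.c i₀ i₁) :
    MvPolynomial.X i₁ ∉ (Ideal.span {q.toPoly}).radical := by
  rintro ⟨k, hk⟩
  obtain ⟨p, hp⟩ := Ideal.mem_span_singleton.1 hk
  let y : Fin q.dim → Polynomial K := Function.update (Pi.single i₁ 1) i₀ .X
  have hy₁ : y i₁ = 1 := by simp [y, hq.ne]
  have hyq : MvPolynomial.eval₂Hom Polynomial.C y q.toPoly =
      .X ^ 2 + .X + .C (q.c.toQuadraticForm' (Pi.single i₁ 1)) := by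
    have hy₀ : Function.update y i₀ 0 = Polynomial.C ∘ Pi.single i₁ 1 := by
      rw [comp_single_one, Function.update_idem, Function.update_eq_self_iff]
      simp [hq.ne.symm]
    rw [eval₂Hom_toPoly, (hq.map _).toQuadraticForm'_eq, hy₀, toQuadraticForm'_map, hy₁]
    simp [y]
  have hunit : IsUnit (MvPolynomial.eval₂Hom Polynomial.C y q.toPoly) :=
    .of_mul_eq_one _ (by rw [← map_mul, ← hp, map_pow, MvPolynomial.eval₂Hom_X', hy₁, one_pow])
  have hdeg := Polynomial.natDegree_eq_zero_of_isUnit hunit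
  rw [hyq] at hdeg
  have : (Polynomial.X ^ 2 + Polynomial.X +
    Polynomial.C (q.c.toQuadraticForm' (Pi.single i₁ 1))).natDegree = 2 := by compute_degree!
  omega

theorem not_anisotropic_functionField [IsDomain (CoordRing q)]
    (hq : IsArtinSchreierAt q.c i₀ i₁) :
    ¬ (q.c.map (toFunctionField (F := K) q)).toQuadraticForm'.Anisotropic := by
  intro h
  have isotropic : (q.c.map (toFunctionField (F := K) q)).toQuadraticForm'
      (algebraMap (CoordRing q) (FunctionField q) ∘
        fun i ↦ Ideal.Quotient.mk _ (MvPolynomial.X i)) = 0 :=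
    (toQuadraticForm'_map (algebraMap _ (FunctionField q)) (q.c.map (algebraMap K _)) _).trans
      (by rw [toQuadraticForm'_coordRing_X, map_zero])
  have hX := congrFun (h _ isotropic) i₁
  rw [Function.comp_apply, Pi.zero_apply, FaithfulSMul.algebraMap_eq_zero_iff,
    Ideal.Quotient.eq_zero_iff_mem] at hX
  exact X_notMem_radical_span_toPoly hq hX

end FunctionField

section QuadraticExtension

variable {E M : Type*} [Field E] [Field M] {ι : Type*} [Fintype ι] [DecidableEq ι]

theorem HasLagrangian.map (f : E →+* M) {c : Matrix ι ι E} (h : HasLagrangian c.toQuadraticForm') :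
    HasLagrangian (c.map f).toQuadraticForm' := by
  obtain ⟨I, hI, hdim⟩ := h
  let b := Module.finBasis E I
  have hb : LinearIndependent M fun j ↦ f ∘ (b j : ι → E) :=
    let _ := f.toAlgebra
    linearIndependent_algebraMap_comp_iff.2 (b.linearIndependent.map' I.subtype I.ker_subtype)
  have isotropic : SameGram c.toQuadraticForm' (fun j ↦ (b j : ι → E))
      (0 : Matrix ι ι E).toQuadraticForm' 0 :=
    ⟨fun j ↦ by rw [hI _ (b j).2, Pi.zero_apply, QuadraticMap.map_zero],
      fun i j ↦ by
        rw [hI.polar_eq_zero (b i).2 (b j).2, Pi.zero_apply, QuadraticMap.polar_zero_left]⟩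
  refine ⟨Submodule.span M (Set.range fun j ↦ f ∘ (b j : ι → E)), fun x hx ↦ ?_, ?_⟩
  · obtain ⟨a, rfl⟩ := (Submodule.mem_span_range_iff_exists_fun M).1 hx
    rw [(isotropic.map f).map_sum_smul]
    simp [toQuadraticForm'_apply]
  · rwa [finrank_span_eq_card hb, Fintype.card_fin, Module.finrank_fintype_fun_eq_card,
      ← Module.finrank_fintype_fun_eq_card E]

theorem HasLagrangian.subsingleton {V : Type*} [AddCommGroup V] [Module E V] [FiniteDimensional E V]
    {Q : QuadraticForm E V} (h : HasLagrangian Q) (hQ : Q.Anisotropic) : Subsingleton V := by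
  obtain ⟨I, hI, hdim⟩ := h
  have hI' : I = ⊥ := (Submodule.eq_bot_iff I).2 fun x hx ↦ hQ x (hI x hx)
  rw [hI', finrank_bot] at hdim
  exact Module.finrank_zero_iff.1 (Nat.le_zero.1 hdim)

variable [Algebra E M]

/-- The coordinate along `b 1` is injective on a Lagrangian, because a vector of the Lagrangian
without such a coordinate is an isotropic vector over `E`. So it is onto, by dimension. -/
theorem exists_isotropic_add_smul_of_hasLagrangian (b : Module.Basis (Fin 2) E M) (hb : b 0 = 1)
    {c : Matrix ι ι E} (hc : c.toQuadraticForm'.Anisotropic)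
    (h : HasLagrangian (c.map (algebraMap E M)).toQuadraticForm') (v : ι → E) :
    ∃ u : ι → E, (c.map (algebraMap E M)).toQuadraticForm'
      (algebraMap E M ∘ u + b 1 • (algebraMap E M ∘ v)) = 0 := by
  have := Module.Finite.of_basis b
  have decomposition (m : ι → M) : m = algebraMap E M ∘ (b.coord 0 ∘ m) +
      b 1 • (algebraMap E M ∘ (b.coord 1 ∘ m)) := by
    ext i
    conv_lhs => rw [← b.sum_repr (m i), Fin.sum_univ_two, hb]
    simp [Algebra.smul_def, mul_comm]
  obtain ⟨I, hI, hdim⟩ := h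
  let δ : I →ₗ[E] ι → E := (b.coord 1).compLeft ι ∘ₗ I.subtype.restrictScalars E
  have hδ : Function.Injective δ := by
    refine (injective_iff_map_eq_zero δ).2 fun ⟨m, hm⟩ hm₁ ↦ Subtype.ext ?_
    have hm₀ : m = algebraMap E M ∘ (b.coord 0 ∘ m) := by
      conv_lhs => rw [decomposition m, show b.coord 1 ∘ m = 0 from hm₁]
      ext i
      simp
    have isotropic := hI m hm
    rw [hm₀, toQuadraticForm'_map, FaithfulSMul.algebraMap_eq_zero_iff] at isotropic
    change m = 0
    rw [hm₀, hc _ isotropic]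
    ext i
    simp
  have hfinrank : finrank E (ι → E) ≤ finrank E I := by
    rwa [← Module.finrank_mul_finrank E M I, Module.finrank_eq_card_basis b, Fintype.card_fin,
      Module.finrank_fintype_fun_eq_card, ← Module.finrank_fintype_fun_eq_card M]
  have : FiniteDimensional E I := .of_injective δ hδ
  obtain ⟨⟨m, hm⟩, hmv⟩ := (LinearMap.injective_iff_surjective_of_finrank_eq_finrank
    ((LinearMap.finrank_le_finrank_of_injective hδ).antisymm hfinrank)).1 hδ v
  refine ⟨b.coord 0 ∘ m, ?_⟩
  rw [← hmv]
  exact (congrArg _ (decomposition m).symm).trans (hI m hm)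

theorem exists_value_and_polar_of_hasLagrangian (b : Module.Basis (Fin 2) E M) (hb : b 0 = 1)
    {d : E} (hd : b 1 ^ 2 + b 1 = algebraMap E M d) {c : Matrix ι ι E}
    (hc : c.toQuadraticForm'.Anisotropic)
    (h : HasLagrangian (c.map (algebraMap E M)).toQuadraticForm') (v : ι → E) :
    ∃ u, c.toQuadraticForm' u = -(d * c.toQuadraticForm' v) ∧
      polar c.toQuadraticForm' u v = c.toQuadraticForm' v := by
  obtain ⟨u, hu⟩ := exists_isotropic_add_smul_of_hasLagrangian b hb hc h v
  rw [QuadraticMap.map_add (Matrix.toQuadraticForm' _), QuadraticMap.map_smul,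
    QuadraticMap.polar_smul_right, toQuadraticForm'_map, toQuadraticForm'_map, polar_map,
    smul_eq_mul, smul_eq_mul] at hu
  have coordinates : ∑ i, ![c.toQuadraticForm' u + d * c.toQuadraticForm' v,
      polar c.toQuadraticForm' u v - c.toQuadraticForm' v] i • b i = 0 := by
    simp only [Fin.sum_univ_two, Matrix.cons_val_zero, Matrix.cons_val_one, hb, Algebra.smul_def,
      map_add, map_mul, map_sub]
    linear_combination hu - algebraMap E M (c.toQuadraticForm' v) * hd
  have h₀ := Fintype.linearIndependent_iff.1 b.linearIndependent _ coordinates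
  exact ⟨u, eq_neg_of_add_eq_zero_left (h₀ 0), sub_eq_zero.1 (h₀ 1)⟩

end QuadraticExtension

section FunctionFieldHyperbolicity

variable {K : Type*} [Field K] {q : QF K} [IsDomain (CoordRing q)] {i₀ i₁ : Fin q.dim}
  {ι : Type*} [Fintype ι] [DecidableEq ι]

theorem exists_basis_artinSchreier.{u} {E : Type u} [Field E] (d : E) (hd : ∀ z, z ^ 2 + z ≠ d) :
    ∃ (M : Type u) (_ : Field M) (_ : Algebra E M) (b : Module.Basis (Fin 2) E M),
      b 0 = 1 ∧ b 1 ^ 2 + b 1 = algebraMap E M d := by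
  let p : Polynomial E := .X ^ 2 + .X - .C d
  have hdeg : p.natDegree = 2 := by simp only [p]; compute_degree!
  have hp : p.Monic := by simp only [p]; monicity!
  have : Fact (Irreducible p) := ⟨Polynomial.irreducible_of_degree_le_three_of_not_isRoot
    (by simp [hdeg]) fun z hz ↦ hd z (by simpa [p, sub_eq_zero] using hz)⟩
  have hroot : AdjoinRoot.root p ^ 2 + AdjoinRoot.root p = algebraMap E (AdjoinRoot p) d := by
    simpa [p, sub_eq_zero] using AdjoinRoot.eval₂_root p
  let b := (AdjoinRoot.powerBasis' hp).basis.reindex (finCongr hdeg)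
  have hb (i : Fin 2) : b i = AdjoinRoot.root p ^ (i : ℕ) := by
    simp only [b, Module.Basis.reindex_apply, PowerBasis.basis_eq_pow]
    rfl
  exact ⟨AdjoinRoot p, inferInstance, inferInstance, b, by simp [hb], by simpa [hb] using hroot⟩

theorem GenericPoint.comp_left {M N σ : Type*} [Field M] [Field N] {f : K →+* M} {y : σ → M}
    (hy : GenericPoint f y) (g : M →+* N) : GenericPoint (g.comp f) (g ∘ y) := by
  have hcomp : MvPolynomial.eval₂Hom (g.comp f) (g ∘ y) = g.comp (MvPolynomial.eval₂Hom f y) := by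
    refine MvPolynomial.ringHom_ext (fun a ↦ ?_) fun j ↦ ?_ <;> simp
  rw [GenericPoint, hcomp]
  exact g.injective.comp hy

theorem GenericPoint.comp_right {M σ τ : Type*} [Field M] {f : K →+* M} {y : σ → M}
    (hy : GenericPoint f y) {g : τ → σ} (hg : Function.Injective g) : GenericPoint f (y ∘ g) := by
  have hcomp : MvPolynomial.eval₂Hom f (y ∘ g) =
      (MvPolynomial.eval₂Hom f y).comp (MvPolynomial.rename g).toRingHom := by
    refine MvPolynomial.ringHom_ext (fun a ↦ ?_) fun j ↦ ?_ <;> simp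
  rw [GenericPoint, hcomp]
  exact hy.comp (MvPolynomial.rename_injective g hg)

theorem GenericPoint.ne_zero {M σ : Type*} [Field M] {f : K →+* M} {y : σ → M}
    (hy : GenericPoint f y) (i : σ) : y i ≠ 0 := fun h ↦
  MvPolynomial.X_ne_zero i (hy (by simp [h]))

theorem HasLagrangian.of_functionField (hq : IsArtinSchreierAt q.c i₀ i₁) {c : Matrix ι ι K}
    (h : HasLagrangian (c.map (toFunctionField (F := K) q)).toQuadraticForm')
    {N : Type*} [Field N] {f : K →+* N} {y : Fin q.dim → N} (hy : GenericPoint f y) {z : N}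
    (hz : y i₁ ^ 2 * (z ^ 2 + z) + (q.c.map f).toQuadraticForm' (Function.update y i₀ 0) = 0) :
    HasLagrangian (c.map f).toQuadraticForm' := by
  obtain ⟨g, hg⟩ := exists_functionField_hom hq f (y := Function.update y i₀ (y i₁ * z))
    (by
      convert hy.comp_right (Subtype.val_injective (p := (· ≠ i₀))) using 2 with j
      exact Function.update_of_ne j.2 _ _)
    (by
      rw [(hq.map f).toQuadraticForm'_eq, Function.update_self, Function.update_of_ne hq.ne,
        Function.update_idem]
      linear_combination hz)
  have := h.map g
  rwa [Matrix.map_map, ← RingHom.coe_comp, hg] at this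

/-- Over a field containing a root of `z² + z = d` the quadric has a generic point, so `c` would
become hyperbolic. Hence `z² + z - d` is irreducible, and `c` is hyperbolic over the quadratic
extension it defines. -/
theorem exists_eq_mul_of_genericPoint (hq : IsArtinSchreierAt q.c i₀ i₁) {c : Matrix ι ι K}
    (h : HasLagrangian (c.map (toFunctionField (F := K) q)).toQuadraticForm')
    {M : Type*} [Field M] {f : K →+* M} (hc : (c.map f).toQuadraticForm'.Anisotropic)
    {y : Fin q.dim → M} (hy : GenericPoint f y) (v : ι → M) :
    ∃ w, (c.map f).toQuadraticForm' w =
      (c.map f).toQuadraticForm' v * (q.c.map f).toQuadraticForm' y := by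
  obtain ⟨d, hd⟩ : ∃ d, (q.c.map f).toQuadraticForm' (Function.update y i₀ 0) = -(y i₁ ^ 2 * d) :=
    ⟨-(q.c.map f).toQuadraticForm' (Function.update y i₀ 0) / y i₁ ^ 2, by
      field_simp [hy.ne_zero i₁]⟩
  by_cases hroot : ∃ z, z ^ 2 + z = d
  · obtain ⟨z, rfl⟩ := hroot
    have := (h.of_functionField hq hy (by rw [hd, add_neg_cancel])).subsingleton hc
    exact ⟨0, by simp [Subsingleton.elim v 0]⟩
  push Not at hroot
  obtain ⟨N, _, _, b, hb₀, hb₁⟩ := exists_basis_artinSchreier d hroot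
  have h' : HasLagrangian ((c.map f).map (algebraMap M N)).toQuadraticForm' := by
    have value : (q.c.map ((algebraMap M N).comp f)).toQuadraticForm'
        (Function.update (algebraMap M N ∘ y) i₀ 0) = algebraMap M N (-(y i₁ ^ 2 * d)) := by
      rw [← hd, ← toQuadraticForm'_map, Function.comp_update, map_zero, Matrix.map_map,
        RingHom.coe_comp]
    rw [Matrix.map_map, ← RingHom.coe_comp]
    exact h.of_functionField hq (hy.comp_left _) (z := b 1) (by
      rw [value, hb₁, map_neg, map_mul, map_pow, Function.comp_apply, add_neg_cancel])
  obtain ⟨u, hu, huv⟩ := exists_value_and_polar_of_hasLagrangian b hb₀ hb₁ hc h' v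
  refine ⟨y i₀ • v + y i₁ • u, ?_⟩
  rw [QuadraticMap.map_add (Matrix.toQuadraticForm' _), QuadraticMap.map_smul,
    QuadraticMap.map_smul, QuadraticMap.polar_smul_left, QuadraticMap.polar_smul_right,
    QuadraticMap.polar_comm, hu, huv, (hq.map f).toQuadraticForm'_eq, hd]
  simp only [smul_eq_mul]
  ring

end FunctionFieldHyperbolicity

section GenericSimilarity

universe u

variable {K : Type u} [Field K] {q : QF K} [IsDomain (CoordRing q)] {i₀ i₁ : Fin q.dim}
  {ι : Type*} [Fintype ι] [DecidableEq ι]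

theorem exists_isometry_smul_of_hasLagrangian (hq : IsArtinSchreierAt q.c i₀ i₁)
    {c : Matrix ι ι K} (hc : c.toQuadraticForm'.Anisotropic)
    (h : HasLagrangian (c.map (toFunctionField (F := K) q)).toQuadraticForm') (v : ι → K) :
    Nonempty ((c.toQuadraticForm' v • q.form) →qᵢ c.toQuadraticForm') := by
  obtain ⟨σ, hσ⟩ := exists_sameGram_of_genericPoint (c.toQuadraticForm' v • q.c)
    (Fin.cons 0 fun i ↦ Pi.single i 1) hc fun M _ f x hM hx ↦ by
      obtain ⟨w, hw⟩ := exists_eq_mul_of_genericPoint hq h hM hx (f ∘ v)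
      refine ⟨w, ?_⟩
      have hsmul : (c.toQuadraticForm' v • q.c).map f =
          f (c.toQuadraticForm' v) • q.c.map f := Matrix.map_smul' _ _ _ (by simp)
      have hx' : f ∘ (0 : Fin q.dim → K) = 0 := by
        ext
        simp
      simp only [Fin.cons_zero, Fin.cons_succ, comp_single_one, sum_smul_single_one, hx', zero_add,
        hsmul, toQuadraticForm'_smul, smul_apply, hw, toQuadraticForm'_map, smul_eq_mul]
  refine ⟨{ Fintype.linearCombination K fun i : Fin q.dim ↦ σ i.succ with map_app' := fun y ↦ ?_ }⟩
  have hσ' : SameGram c.toQuadraticForm' (fun i : Fin q.dim ↦ σ i.succ)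
      (c.toQuadraticForm' v • q.c).toQuadraticForm' fun i ↦ Pi.single i 1 :=
    ⟨fun i ↦ hσ.1 i.succ, fun i j ↦ hσ.2 i.succ j.succ⟩
  have := hσ'.map_sum_smul y
  rwa [sum_smul_single_one, toQuadraticForm'_smul] at this

end GenericSimilarity

section SimilarityFactors

variable {E V V' : Type*} [Field E] [AddCommGroup V] [Module E V] [AddCommGroup V'] [Module E V']
  {Q : QuadraticForm E V} {Q' : QuadraticForm E V'} {a b : E}

theorem smul_equivalent_smul (a : E) (h : Q.Equivalent Q') : (a • Q).Equivalent (a • Q') := by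
  obtain ⟨e⟩ := h
  exact ⟨{ e.toLinearEquiv with map_app' := fun x ↦ congrArg (a * ·) (e.map_app x) }⟩

theorem mul_smul_equivalent (h : (b • Q).Equivalent Q) : ((a * b) • Q).Equivalent (a • Q) := by
  rw [mul_smul]
  exact smul_equivalent_smul a h

theorem smul_prod (a : E) (Q : QuadraticForm E V) (Q' : QuadraticForm E V') :
    a • Q.prod Q' = (a • Q).prod (a • Q') := by
  ext x
  simp [mul_add]

theorem HasLagrangian.smul (h : HasLagrangian Q) (a : E) : HasLagrangian (a • Q) := by
  obtain ⟨I, hI, hdim⟩ := h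
  exact ⟨I, fun x hx ↦ by simp [hI x hx], hdim⟩

theorem sq_smul_equivalent (ha : a ≠ 0) (Q : QuadraticForm E V) : ((a * a) • Q).Equivalent Q :=
  ⟨{ LinearEquiv.smulOfNeZero E V a ha with
    map_app' := fun x ↦ QuadraticMap.map_smul Q a x }⟩

theorem smul_prod_equivalent [FiniteDimensional E V] (hQ : IsNonsingular Q)
    (ha : a ≠ 0) (hb : b ≠ 0) (hab : a + b ≠ 0) :
    ((a + b) • Q.prod ((a * b) • Q)).Equivalent ((a • Q).prod (b • Q)) := by
  have hprod : IsNonsingular (Q.prod ((a * b) • Q)) :=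
    isNonsingular_prod.2 ⟨hQ, hQ.smul (mul_ne_zero ha hb)⟩
  refine equivalent_of_isometry (hprod.smul hab) {
    LinearMap.prod (LinearMap.fst E V V + b • LinearMap.snd E V V)
      (LinearMap.fst E V V - a • LinearMap.snd E V V) with map_app' := ?_ } rfl
  rintro ⟨x, y⟩
  have expand (t : E) : Q (x + t • y) = Q x + t * t * Q y + t * polar Q x y := by
    rw [QuadraticMap.map_add Q, QuadraticMap.map_smul, QuadraticMap.polar_smul_right, smul_eq_mul,
      smul_eq_mul]
  have expand_neg : Q (x - a • y) = Q x + a * a * Q y - a * polar Q x y := by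
    rw [sub_eq_add_neg, ← neg_smul, expand]
    ring
  change a * Q (x + b • y) + b * Q (x - a • y) = (a + b) * (Q x + a * b * Q y)
  rw [expand, expand_neg]
  ring

end SimilarityFactors

section Pfister

variable {E V V' : Type*} [Field E] [AddCommGroup V] [Module E V] [AddCommGroup V'] [Module E V']
  {Q : QuadraticForm E V} {Q' : QuadraticForm E V'} {a : E}

/-- The multiplicative behaviour of quadratic Pfister forms: a nonsingular form which is *round*,
i.e. similar to itself with every nonzero factor that it represents, and which is hyperbolic
(expressed by a Lagrangian) as soon as it is isotropic. -/
structure IsPfisterLike (Q : QuadraticForm E V) : Prop where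
  isNonsingular : IsNonsingular Q
  round : ∀ x, Q x ≠ 0 → (Q x • Q).Equivalent Q
  hasLagrangian : ¬ Q.Anisotropic → HasLagrangian Q

namespace IsPfisterLike

theorem equivalent (h : IsPfisterLike Q) (e : Q.Equivalent Q') : IsPfisterLike Q' where
  isNonsingular := h.isNonsingular.equivalent e
  round x hx := by
    obtain ⟨f⟩ := id e
    have hfx : Q (f.symm x) = Q' x := f.symm.map_app x
    rw [← hfx] at hx ⊢
    exact (smul_equivalent_smul _ e.symm).trans ((h.round _ hx).trans e)
  hasLagrangian hQ' := by
    refine (h.hasLagrangian fun hQ ↦ hQ' fun x hx ↦ ?_).equivalent e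
    obtain ⟨f⟩ := id e
    have hfx : f.symm x = 0 := hQ _ ((f.symm.map_app x).trans hx)
    exact f.symm.toLinearEquiv.map_eq_zero_iff.1 hfx

variable [FiniteDimensional E V]

theorem round_prod_smul (h : IsPfisterLike Q) (ha : a ≠ 0) (x : V × V)
    (hx : Q.prod (a • Q) x ≠ 0) :
    (Q.prod (a • Q) x • Q.prod (a • Q)).Equivalent (Q.prod (a • Q)) := by
  obtain ⟨u, v⟩ := x
  have value : Q.prod (a • Q) (u, v) = Q u + a * Q v := by simp
  rw [value] at hx ⊢
  by_cases hv : Q v = 0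
  · rw [hv, mul_zero, add_zero] at hx ⊢
    rw [smul_prod, smul_comm]
    exact (h.round u hx).prod (smul_equivalent_smul a (h.round u hx))
  have hav : a * Q v ≠ 0 := mul_ne_zero ha hv
  have equiv_smul : ((a * Q v) • Q).Equivalent (a • Q) := mul_smul_equivalent (h.round v hv)
  by_cases hu : Q u = 0
  · rw [hu, zero_add, smul_prod, smul_comm]
    refine (equiv_smul.prod ((smul_equivalent_smul a equiv_smul).trans ?_)).trans
      (prod_comm_equivalent _ _)
    rw [smul_smul]
    exact sq_smul_equivalent ha Q
  · have equiv_mul : ((Q u * (a * Q v)) • Q).Equivalent (a • Q) := by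
      rw [mul_comm]
      exact (mul_smul_equivalent (h.round u hu)).trans equiv_smul
    exact (smul_equivalent_smul _ ((QuadraticMap.Equivalent.refl Q).prod equiv_mul.symm)).trans
      ((smul_prod_equivalent h.isNonsingular hu hav hx).trans ((h.round u hu).prod equiv_smul))

variable [CharP E 2]

theorem hasLagrangian_prod_smul (h : IsPfisterLike Q) (ha : a ≠ 0)
    (hQa : ¬ (Q.prod (a • Q)).Anisotropic) : HasLagrangian (Q.prod (a • Q)) := by
  by_cases hQ : Q.Anisotropic
  · obtain ⟨⟨u, v⟩, huv, hne⟩ : ∃ x, Q.prod (a • Q) x = 0 ∧ x ≠ 0 := by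
      simpa [QuadraticMap.Anisotropic] using hQa
    replace huv : Q u = a * Q v := CharTwo.add_eq_zero.1 (by simpa using huv)
    have hv : Q v ≠ 0 := by
      intro hv
      rw [hv, mul_zero] at huv
      exact hne (Prod.ext (hQ u huv) (hQ v hv))
    have hu : Q u ≠ 0 := huv ▸ mul_ne_zero ha hv
    have equiv : (a • Q).Equivalent Q :=
      (mul_smul_equivalent (h.round v hv)).symm.trans (huv ▸ h.round u hu)
    exact (hasLagrangian_prod_self Q).equivalent ((QuadraticMap.Equivalent.refl Q).prod equiv.symm)
  · exact (h.hasLagrangian hQ).prod ((h.hasLagrangian hQ).smul a)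

theorem prod_smul (h : IsPfisterLike Q) (ha : a ≠ 0) : IsPfisterLike (Q.prod (a • Q)) where
  isNonsingular := isNonsingular_prod.2 ⟨h.isNonsingular, h.isNonsingular.smul ha⟩
  round := h.round_prod_smul ha
  hasLagrangian := h.hasLagrangian_prod_smul ha

end IsPfisterLike

variable [CharP E 2]

theorem isPfisterLike_bin (b : E) : IsPfisterLike (bin 1 b).form where
  isNonsingular := isNonsingular_bin 1 b
  round (x : Fin 2 → E) hx := by
    let σ : (Fin 2 → E) →ₗ[E] (Fin 2 → E) := Matrix.toLin' !![x 0, -(b * x 1); x 1, x 0 + x 1]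
    have hσ (y : Fin 2 → E) : (bin 1 b).form (σ y) = (bin 1 b).form x * (bin 1 b).form y := by
      rw [bin_apply, bin_apply, bin_apply, Matrix.toLin'_apply]
      simp only [Matrix.mulVec, Matrix.of_apply, dotProduct, Fin.sum_univ_two,
        Matrix.cons_val_zero, Matrix.cons_val_one, Matrix.cons_val_fin_one]
      ring
    exact equivalent_of_isometry ((isNonsingular_bin 1 b).smul hx) { σ with map_app' := hσ } rfl
  hasLagrangian h := by
    obtain ⟨x, hx, hne⟩ : ∃ x, (bin 1 b).form x = 0 ∧ x ≠ 0 := by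
      simpa [QuadraticMap.Anisotropic] using h
    exact hasLagrangian_of_isotropic (Module.finrank_fin_fun E).le hne hx

theorem isPfisterLike_pfTensor {q : QF E} (hq : IsPfisterLike q.form) {l : List E}
    (hl : ∀ a ∈ l, a ≠ 0) : IsPfisterLike (pfTensor l q).form := by
  induction l with
  | nil => exact hq
  | cons a l ih =>
    have ⟨ha, hl'⟩ := List.forall_mem_cons.1 hl
    refine ((ih hl').prod_smul ha).equivalent ?_
    rw [← form_smul]
    exact orthSum_equivalent (pfTensor l q) ((pfTensor l q).smul a)

end Pfister

section PfisterCoefficients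

variable {F E : Type*} [Field F] [Field E]

theorem map_bin (f : F →+* E) (a b : F) : (bin a b).map f = bin (f a) (f b) := by
  unfold QF.map bin
  congr 1
  ext i j
  fin_cases i <;> fin_cases j <;> simp

theorem map_pfTensor (f : F →+* E) (l : List F) (q : QF F) :
    (pfTensor l q).map f = pfTensor (l.map f) (q.map f) := by
  induction l with
  | nil => rfl
  | cons a l ih =>
    change ((pfTensor l q).orthSum ((pfTensor l q).smul a)).map f = _
    rw [map_orthSum, map_smul, ih]
    rfl

theorem isArtinSchreierAt_bin (b : F) :
    IsArtinSchreierAt (!![1, 1; 0, b] : Matrix (Fin 2) (Fin 2) F) 0 1 where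
  ne := one_ne_zero
  row := by
    ext j
    fin_cases j <;> simp
  col j hj := by
    fin_cases j <;> simp_all

section Blocks

variable {ι ι' : Type*} [DecidableEq ι] [DecidableEq ι'] {c : Matrix ι ι F} {i₀ i₁ : ι}

theorem IsArtinSchreierAt.fromBlocks (h : IsArtinSchreierAt c i₀ i₁) (c' : Matrix ι' ι' F) :
    IsArtinSchreierAt (Matrix.fromBlocks c 0 0 c') (.inl i₀) (.inl i₁) where
  ne := by simpa using h.ne
  row := by
    ext (j | j) <;> simp [h.row, Pi.single_apply]
  col := by
    rintro (j | j) hj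
    · simpa using h.col j (by simpa using hj)
    · simp

theorem IsArtinSchreierAt.reindex (h : IsArtinSchreierAt c i₀ i₁) (e : ι ≃ ι') :
    IsArtinSchreierAt (Matrix.reindex e e c) (e i₀) (e i₁) where
  ne := by simpa using h.ne
  row := by
    ext j
    simp [h.row, Pi.single_apply, Equiv.symm_apply_eq]
  col j hj := by
    simpa using h.col (e.symm j) (by simpa [Equiv.symm_apply_eq] using hj)

end Blocks

theorem exists_isArtinSchreierAt_pfTensor (l : List F) (b : F) :
    ∃ i₀ i₁, IsArtinSchreierAt (pfTensor l (bin 1 b)).c i₀ i₁ := by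
  induction l with
  | nil => exact ⟨(0 : Fin 2), (1 : Fin 2), isArtinSchreierAt_bin b⟩
  | cons a l ih =>
    obtain ⟨i₀, i₁, h⟩ := ih
    exact ⟨_, _, (h.fromBlocks _).reindex finSumFinEquiv⟩

end PfisterCoefficients

section WittGroup

theorem isNonsingular_form_map {F E : Type*} [Field F] [Field E] (f : F →+* E)
    {q : QF F} (hq : IsNonsingular q.form) : IsNonsingular (q.map f).form :=
  hq.map f

variable {F E : Type*} [Field F] [Field E] [CharP F 2] [CharP E 2]

/-- Witt equivalence of nonsingular forms. In characteristic 2 every form is its own inverse, so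
`q` and `q'` are identified when `q ⊥ q'`, rather than `q ⊥ -q'`, is hyperbolic. -/
def wittSetoid (F : Type*) [Field F] [CharP F 2] : Setoid {q : QF F // IsNonsingular q.form} where
  r q q' := HasLagrangian (q.1.form.prod q'.1.form)
  iseqv :=
    { refl q := hasLagrangian_prod_self q.1.form
      symm h := h.equivalent (prod_comm_equivalent _ _)
      trans {q q' q''} h h' :=
        .of_prod (isNonsingular_prod.2 ⟨q'.2, q'.2⟩)
          ((h.prod (h'.equivalent (prod_comm_equivalent _ _))).equivalent
            ⟨.prodProdProdComm q.1.form q'.1.form q''.1.form q'.1.form⟩)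
          (hasLagrangian_prod_self q'.1.form) }

/-- The Witt group `W_q(F)` of nonsingular quadratic forms over a field `F` of
characteristic 2. -/
def WittGroup (F : Type*) [Field F] [CharP F 2] : Type _ := Quotient (wittSetoid F)

namespace WittGroup

/-- The Witt class of a nonsingular quadratic form. -/
def mk (q : QF F) (hq : IsNonsingular q.form) : WittGroup F := Quotient.mk (wittSetoid F) ⟨q, hq⟩

theorem mk_eq_mk_iff {q q' : QF F} {hq : IsNonsingular q.form} {hq' : IsNonsingular q'.form} :
    mk q hq = mk q' hq' ↔ HasLagrangian (q.form.prod q'.form) :=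
  Quotient.eq

theorem mk_eq_mk_of_equivalent {q q' : QF F} {hq : IsNonsingular q.form}
    {hq' : IsNonsingular q'.form} (e : q.form.Equivalent q'.form) : mk q hq = mk q' hq' :=
  mk_eq_mk_iff.2 <|
    (hasLagrangian_prod_self q.form).equivalent ((QuadraticMap.Equivalent.refl _).prod e)

instance : Zero (WittGroup F) := ⟨mk nil (isNonsingular_hyp_and_hasLagrangian 0).1⟩

theorem mk_eq_zero_iff {q : QF F} {hq : IsNonsingular q.form} :
    mk q hq = 0 ↔ HasLagrangian q.form := by
  have ⟨hnil, hLag⟩ := isNonsingular_hyp_and_hasLagrangian (E := F) 0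
  exact mk_eq_mk_iff.trans ⟨fun h ↦ .of_prod hnil h hLag, fun h ↦ h.prod hLag⟩

instance : Add (WittGroup F) where
  add := Quotient.map₂ (fun q q' ↦ ⟨q.1.orthSum q'.1, isNonsingular_orthSum.2 ⟨q.2, q'.2⟩⟩)
    fun q₁ q₂ h q₁' q₂' h' ↦ ((HasLagrangian.prod h h').equivalent
      ⟨.prodProdProdComm q₁.1.form q₂.1.form q₁'.1.form q₂'.1.form⟩).equivalent
        ((orthSum_equivalent _ _).prod (orthSum_equivalent _ _))

theorem mk_orthSum {q q' : QF F} (h : IsNonsingular (q.orthSum q').form) :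
    mk (q.orthSum q') h =
      mk q (isNonsingular_orthSum.1 h).1 + mk q' (isNonsingular_orthSum.1 h).2 :=
  rfl

theorem ind {p : WittGroup F → Prop} (h : ∀ q hq, p (mk q hq)) (x : WittGroup F) : p x :=
  Quotient.ind (fun q ↦ h q.1 q.2) x

protected theorem add_self (x : WittGroup F) : x + x = 0 := by
  induction x using ind with | _ q hq
  rw [← mk_orthSum (isNonsingular_orthSum.2 ⟨hq, hq⟩), mk_eq_zero_iff, hasLagrangian_orthSum]
  exact hasLagrangian_prod_self q.form

protected theorem add_comm (x y : WittGroup F) : x + y = y + x := by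
  induction x using ind with | _ q hq
  induction y using ind with | _ q' hq'
  exact mk_eq_mk_of_equivalent ((orthSum_equivalent q q').symm.trans
    ((prod_comm_equivalent _ _).trans (orthSum_equivalent q' q)))

protected theorem add_assoc (x y z : WittGroup F) : x + y + z = x + (y + z) := by
  induction x using ind with | _ q₁ h₁
  induction y using ind with | _ q₂ h₂
  induction z using ind with | _ q₃ h₃
  exact mk_eq_mk_of_equivalent <|
    (orthSum_equivalent _ q₃).symm.trans <|
    ((orthSum_equivalent q₁ q₂).symm.prod (.refl _)).trans <|
    (prod_assoc_equivalent _ _ _).trans <|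
    ((QuadraticMap.Equivalent.refl _).prod (orthSum_equivalent q₂ q₃)).trans <|
    orthSum_equivalent q₁ _

protected theorem zero_add (x : WittGroup F) : 0 + x = x := by
  induction x using ind with | _ q hq
  have := isNonsingular_hyp_and_hasLagrangian (E := F) 0
  exact mk_eq_mk_iff.2 <| (this.2.prod (hasLagrangian_prod_self q.form)).equivalent <|
    (prod_assoc_equivalent _ _ _).symm.trans <|
    (orthSum_equivalent nil q).prod (.refl _)

instance : Neg (WittGroup F) := ⟨id⟩

instance : AddCommGroup (WittGroup F) where
  add_assoc := WittGroup.add_assoc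
  zero_add := WittGroup.zero_add
  add_zero x := (WittGroup.add_comm x 0).trans (WittGroup.zero_add x)
  add_comm := WittGroup.add_comm
  neg_add_cancel := WittGroup.add_self
  nsmul := nsmulRec
  zsmul := zsmulRec

/-- Extension of scalars `W_q(F) → W_q(E)`. -/
def map (f : F →+* E) : WittGroup F →+ WittGroup E :=
  AddMonoidHom.mk' (Quotient.map (fun q ↦ ⟨q.1.map f, isNonsingular_form_map f q.2⟩) fun q q' h ↦ by
    have hLag : HasLagrangian ((q.1.orthSum q'.1).map f).form := (hasLagrangian_orthSum.2 h).map f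
    rw [map_orthSum] at hLag
    exact hasLagrangian_orthSum.1 hLag) fun x y ↦ by
      induction x using ind with | _ q hq
      induction y using ind with | _ q' hq'
      exact mk_eq_mk_of_equivalent (by rw [map_orthSum])

theorem map_mk (f : F →+* E) (q : QF F) (hq : IsNonsingular q.form) :
    map f (mk q hq) = mk (q.map f) (isNonsingular_form_map f hq) :=
  rfl

theorem map_comp {M : Type*} [Field M] [CharP M 2] (g : E →+* M) (f : F →+* E) :
    map (g.comp f) = (map g).comp (map f) :=
  AddMonoidHom.ext (ind fun _ _ ↦ rfl)

end WittGroup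

end WittGroup

section WittEquivalence

variable {E V V' W W' : Type*} [Field E] [AddCommGroup V] [Module E V] [AddCommGroup V']
  [Module E V'] [AddCommGroup W] [Module E W] [AddCommGroup W'] [Module E W']

theorem nonempty_isometry_of_equivalent_prod_zero {Q : QuadraticForm E V}
    {Q' : QuadraticForm E V'} (h : (Q.prod (0 : QuadraticForm E W)).Equivalent
      (Q'.prod (0 : QuadraticForm E W'))) : Nonempty (Q →qᵢ Q') := by
  obtain ⟨e⟩ := h
  refine ⟨{ LinearMap.fst E V' W' ∘ₗ e.toLinearEquiv.toLinearMap ∘ₗ LinearMap.inl E V W with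
    map_app' := fun x ↦ ?_ }⟩
  have value := e.map_app (x, 0)
  rwa [QuadraticMap.prod_apply, QuadraticMap.prod_apply, zero_apply, zero_apply, add_zero,
    add_zero] at value

theorem equivalent_of_equivalent_prod_zero [FiniteDimensional E V] [FiniteDimensional E V']
    {Q : QuadraticForm E V} {Q' : QuadraticForm E V'} (hQ : IsNonsingular Q)
    (hQ' : IsNonsingular Q') (h : (Q.prod (0 : QuadraticForm E W)).Equivalent
      (Q'.prod (0 : QuadraticForm E W'))) : Q.Equivalent Q' := by
  obtain ⟨A⟩ := nonempty_isometry_of_equivalent_prod_zero h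
  obtain ⟨B⟩ := nonempty_isometry_of_equivalent_prod_zero h.symm
  exact equivalent_of_isometry hQ A <| le_antisymm
    (LinearMap.finrank_le_finrank_of_injective (f := A.toLinearMap) (hQ.injective A))
    (LinearMap.finrank_le_finrank_of_injective (f := B.toLinearMap) (hQ'.injective B))

theorem orthSum_zeros_equivalent (q q' : QF E) (l : ℕ) :
    ((q.orthSum q').form.prod (0 : QuadraticForm E (Fin l → E))).Equivalent
      (q.orthSum (q'.orthSum (zeros l))).form := by
  have zeros_form : (0 : QuadraticForm E (Fin l → E)) = (zeros l : QF E).form := by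
    ext x
    exact ((toQuadraticForm'_diagonal (fun _ : Fin l ↦ (0 : E)) x).trans (by simp)).symm
  rw [zeros_form]
  exact ((orthSum_equivalent q q').symm.prod (.refl _)).trans <|
    (prod_assoc_equivalent _ _ _).trans <|
    ((QuadraticMap.Equivalent.refl _).prod (orthSum_equivalent q' _)).trans (orthSum_equivalent q _)

variable [CharP E 2]

theorem wittEquiv_iff_exists_equivalent {q q' : QF E} (hq : IsNonsingular q.form)
    (hq' : IsNonsingular q'.form) :
    WittEquiv q q' ↔
      ∃ k k', (q.orthSum (hyp k)).form.Equivalent (q'.orthSum (hyp k')).form := by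
  constructor
  · rintro ⟨k, k', l, l', h⟩
    have h' := (orthSum_zeros_equivalent q (hyp k) l).trans <|
      (isometric_iff.1 h).trans (orthSum_zeros_equivalent q' (hyp k') l').symm
    exact ⟨k, k', equivalent_of_equivalent_prod_zero
      (isNonsingular_orthSum.2 ⟨hq, (isNonsingular_hyp_and_hasLagrangian k).1⟩)
      (isNonsingular_orthSum.2 ⟨hq', (isNonsingular_hyp_and_hasLagrangian k').1⟩) h'⟩
  · rintro ⟨k, k', h⟩
    have h' := h.prod (.refl (0 : QuadraticForm E (Fin 0 → E)))
    exact ⟨k, k', 0, 0, isometric_iff.2 <| (orthSum_zeros_equivalent q (hyp k) 0).symm.trans <|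
      h'.trans (orthSum_zeros_equivalent q' (hyp k') 0)⟩

theorem WittGroup.mk_eq_mk_iff_wittEquiv {q q' : QF E} {hq : IsNonsingular q.form}
    {hq' : IsNonsingular q'.form} : mk q hq = mk q' hq' ↔ WittEquiv q q' := by
  rw [wittEquiv_iff_exists_equivalent hq hq']
  constructor
  · intro h
    obtain ⟨k, hk⟩ := hyperbolic_of_hasLagrangian (isNonsingular_orthSum.2 ⟨hq, hq'⟩)
      (hasLagrangian_orthSum.2 (mk_eq_mk_iff.1 h))
    obtain ⟨k', hk'⟩ := hyperbolic_of_hasLagrangian (isNonsingular_orthSum.2 ⟨hq', hq'⟩)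
      (hasLagrangian_orthSum.2 (hasLagrangian_prod_self q'.form))
    have e := (orthSum_equivalent q q').trans (isometric_iff.1 hk)
    have e' := (orthSum_equivalent q' q').trans (isometric_iff.1 hk')
    refine ⟨k', k, ?_⟩
    exact (orthSum_equivalent _ _).symm.trans <|
      ((QuadraticMap.Equivalent.refl _).prod e'.symm).trans <|
      (prod_assoc_equivalent _ _ _).symm.trans <|
      (prod_comm_equivalent _ _).trans <|
      ((QuadraticMap.Equivalent.refl _).prod e).trans (orthSum_equivalent _ _)
  · rintro ⟨k, k', h⟩
    obtain ⟨hk, hkLag⟩ := isNonsingular_hyp_and_hasLagrangian (E := E) k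
    obtain ⟨hk', hk'Lag⟩ := isNonsingular_hyp_and_hasLagrangian (E := E) k'
    calc mk q hq = mk q hq + mk (hyp k) hk := by rw [mk_eq_zero_iff.2 hkLag, add_zero]
      _ = mk q' hq' + mk (hyp k') hk' :=
          mk_eq_mk_of_equivalent (hq := isNonsingular_orthSum.2 ⟨hq, hk⟩)
            (hq' := isNonsingular_orthSum.2 ⟨hq', hk'⟩) h
      _ = mk q' hq' := by rw [mk_eq_zero_iff.2 hk'Lag, add_zero]

theorem WittGroup.mk_mem_ker_map_iff {F : Type*} [Field F] [CharP F 2] {f : F →+* E} {q : QF F}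
    {hq : IsNonsingular q.form} : mk q hq ∈ (map f).ker ↔ (q.map f).Hyperbolic := by
  rw [AddMonoidHom.mem_ker, map_mk, mk_eq_zero_iff,
    hyperbolic_iff_hasLagrangian (isNonsingular_form_map f hq)]

end WittEquivalence

section Kernel

namespace WittGroup

section Multiples

variable {F E : Type*} [Field F] [Field E] [CharP F 2] [CharP E 2] {π : QF F}

/-- The subgroup `W(F) ⊗ π` of `W_q(F)`, generated by the nonzero scalar multiples of `π`: every
class in `W(F)` is represented by a diagonal bilinear form. -/
def multiples (π : QF F) : AddSubgroup (WittGroup F) :=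
  .closure {x | ∃ c ≠ 0, ∃ h : IsNonsingular (π.smul c).form, mk (π.smul c) h = x}

theorem mk_smul_mem_multiples {c : F} (hc : c ≠ 0) (h : IsNonsingular (π.smul c).form) :
    mk (π.smul c) h ∈ multiples π :=
  AddSubgroup.subset_closure ⟨c, hc, h, rfl⟩

theorem mem_multiples_iff {x : WittGroup F} : x ∈ multiples π ↔
    ∃ bs : List F, (∀ c ∈ bs, c ≠ 0) ∧
      ∃ h, mk (sumList (bs.map fun c ↦ smul c π)) h = x := by
  constructor
  · intro hx
    have add_multiple (x) (hx : ∃ c ≠ 0, ∃ h : IsNonsingular (π.smul c).form,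
        mk (π.smul c) h = x) (y : WittGroup F) : (∃ bs : List F, (∀ c ∈ bs, c ≠ 0) ∧
          ∃ h, mk (sumList (bs.map fun c ↦ smul c π)) h = y) →
        ∃ bs : List F, (∀ c ∈ bs, c ≠ 0) ∧
          ∃ h, mk (sumList (bs.map fun c ↦ smul c π)) h = x + y := by
      obtain ⟨c, hc, h, rfl⟩ := hx
      rintro ⟨bs, hbs, h', rfl⟩
      exact ⟨c :: bs, List.forall_mem_cons.2 ⟨hc, hbs⟩, isNonsingular_orthSum.2 ⟨h, h'⟩, rfl⟩
    induction hx using AddSubgroup.closure_induction_left with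
    | zero => exact ⟨[], by simp, (isNonsingular_hyp_and_hasLagrangian 0).1, rfl⟩
    | add_left x hx y _ ih => exact add_multiple x hx y ih
    | neg_add_cancel x hx y _ ih => exact add_multiple x hx y ih
  · rintro ⟨bs, hbs, h, rfl⟩
    induction bs with
    | nil => exact zero_mem _
    | cons c bs ih =>
      have ⟨hc, hbs'⟩ := List.forall_mem_cons.1 hbs
      have ⟨hcπ, h'⟩ := isNonsingular_orthSum.1 h
      exact add_mem (mk_smul_mem_multiples hc hcπ) (ih hbs' h')

theorem multiples_le_ker_map {f : F →+* E} (h : HasLagrangian (π.map f).form) :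
    multiples π ≤ (map f).ker := by
  refine (AddSubgroup.closure_le _).2 ?_
  rintro _ ⟨c, -, hcπ, rfl⟩
  rw [SetLike.mem_coe, AddMonoidHom.mem_ker, map_mk, mk_eq_zero_iff, map_smul, form_smul]
  exact h.smul (f c)

theorem ker_map_le_ker_map_comp {M : Type*} [Field M] [CharP M 2] (g : E →+* M) (f : F →+* E) :
    (map f).ker ≤ (map (g.comp f)).ker := by
  intro x hx
  rw [AddMonoidHom.mem_ker, map_comp, AddMonoidHom.comp_apply, AddMonoidHom.mem_ker.1 hx, map_zero]

end Multiples

section Descent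

variable {F K : Type*} [Field F] [Field K] [CharP F 2] [CharP K 2] (f : F →+* K)
  {φ : QF F} (hφ : IsNonsingular φ.form)

theorem exists_dim_lt_of_not_anisotropic (hK : ∀ x : K, ∃ y : F, f y = x ^ 2)
    (hiso : ¬ (φ.c.map f).toQuadraticForm'.Anisotropic) :
    ∃ θ hθ, θ.dim < φ.dim ∧ mk φ hφ - mk θ hθ ∈ (map f).ker := by
  obtain ⟨x, hx, hne⟩ : ∃ x, (φ.c.map f).toQuadraticForm' x = 0 ∧ x ≠ 0 := by
    simpa [QuadraticMap.Anisotropic] using hiso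
  have hspan : IsTotallyIsotropic (φ.c.map f).toQuadraticForm' (K ∙ x) := by
    intro y hy
    obtain ⟨t, rfl⟩ := Submodule.mem_span_singleton.1 hy
    rw [QuadraticMap.map_smul, hx, smul_zero]
  obtain ⟨θ, hdim, hθ, hLag⟩ :=
    exists_hasLagrangian_prod_map f hK 1 hφ hspan (finrank_span_singleton hne).ge
  exact ⟨θ, hθ, by omega, (AddMonoidHom.sub_mem_ker_iff _).2 (mk_eq_mk_iff.2 hLag)⟩

theorem exists_dim_lt_of_isometry (hK : ∀ x : K, ∃ y : F, f y = x ^ 2) {π : QF F}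
    (hπ : IsNonsingular π.form) (hdim : 0 < π.dim) {c : F} (hc : c ≠ 0)
    (A : f c • (π.map f).form →qᵢ (φ.map f).form) :
    ∃ θ hθ, θ.dim < φ.dim ∧ mk φ hφ - mk θ hθ ∈ (map f).ker ⊔ multiples π := by
  have hcπ : IsNonsingular (π.smul c).form := form_smul c π ▸ hπ.smul hc
  have A' : ((π.map f).smul (f c)).form →qᵢ (φ.map f).form := form_smul (f c) (π.map f) ▸ A
  obtain ⟨I, hI, hdimI⟩ := exists_isTotallyIsotropic_prod A'
  have e : (((π.map f).smul (f c)).form.prod (φ.map f).form).Equivalent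
      (((π.smul c).orthSum φ).map f).form := by
    rw [map_orthSum, map_smul]
    exact orthSum_equivalent _ _
  obtain ⟨J, hJ, hdimJ⟩ := hI.exists_equivalent e
  rw [hdimI, Module.finrank_fin_fun] at hdimJ
  have hsum := isNonsingular_orthSum.2 ⟨hcπ, hφ⟩
  obtain ⟨θ, hdimθ, hθ, hLag⟩ := exists_hasLagrangian_prod_map f hK π.dim hsum hJ hdimJ.ge
  have dim_sum : ((π.smul c).orthSum φ).dim = π.dim + φ.dim := rfl
  have sub_mem : mk (π.smul c) hcπ + mk φ hφ - mk θ hθ ∈ (map f).ker :=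
    (AddMonoidHom.sub_mem_ker_iff _).2 (mk_eq_mk_iff.2 hLag : map f (mk _ hsum) = map f (mk θ hθ))
  refine ⟨θ, hθ, by omega, ?_⟩
  have split : mk φ hφ - mk θ hθ =
      (mk (π.smul c) hcπ + mk φ hφ - mk θ hθ) + -mk (π.smul c) hcπ := by abel
  rw [split]
  exact AddSubgroup.add_mem_sup sub_mem (neg_mem (mk_smul_mem_multiples hc hcπ))

end Descent

section FunctionField

variable {F K : Type*} [Field F] [Field K] [Algebra F K]

theorem toFunctionField_eq_comp (q : QF K) [IsDomain (CoordRing q)] :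
    toFunctionField (F := F) q = (toFunctionField (F := K) q).comp (algebraMap F K) :=
  rfl

variable [CharP F 2] [CharP K 2] {π : QF F} [IsDomain (CoordRing (π.map (algebraMap F K)))]
  [CharP (FunctionField (π.map (algebraMap F K))) 2] {i₀ i₁ : Fin π.dim}

theorem exists_dim_lt_of_mem_ker (hK : ∀ x : K, ∃ y : F, algebraMap F K y = x ^ 2)
    (hπ : IsNonsingular π.form) (hAS : IsArtinSchreierAt π.c i₀ i₁)
    {φ : QF F} (hφ : IsNonsingular φ.form) (hdim : φ.dim ≠ 0)
    (h : mk φ hφ ∈ (map (toFunctionField (F := F) (π.map (algebraMap F K)))).ker) :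
    ∃ θ hθ, θ.dim < φ.dim ∧
      mk φ hφ - mk θ hθ ∈ (map (algebraMap F K)).ker ⊔ multiples π := by
  let f := algebraMap F K
  by_cases haniso : (φ.c.map f).toQuadraticForm'.Anisotropic
  · let i : Fin φ.dim := ⟨0, Nat.pos_of_ne_zero hdim⟩
    let c := φ.form (Pi.single i 1)
    have value : (φ.c.map f).toQuadraticForm' (Pi.single i 1) = f c := by
      rw [← comp_single_one f i, toQuadraticForm'_map]
    have hc : c ≠ 0 := by
      intro hc
      rw [hc, map_zero] at value
      simpa using haniso _ value
    have hLag : HasLagrangian (φ.map (toFunctionField (F := F) (π.map f))).form :=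
      mk_eq_zero_iff.1 (AddMonoidHom.mem_ker.1 h)
    obtain ⟨A⟩ := exists_isometry_smul_of_hasLagrangian (q := π.map f) (hAS.map f) haniso hLag
      (Pi.single i 1)
    rw [value] at A
    exact exists_dim_lt_of_isometry f hφ hK hπ i₀.pos hc A
  · obtain ⟨θ, hθ, hdim, hmem⟩ := exists_dim_lt_of_not_anisotropic f hφ hK haniso
    exact ⟨θ, hθ, hdim, AddSubgroup.mem_sup_left hmem⟩

theorem ker_map_toFunctionField (hK : ∀ x : K, ∃ y : F, algebraMap F K y = x ^ 2)
    (hπ : IsNonsingular π.form) (hAS : IsArtinSchreierAt π.c i₀ i₁)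
    (hπL : HasLagrangian (π.map (toFunctionField (F := F) (π.map (algebraMap F K)))).form) :
    (map (toFunctionField (F := F) (π.map (algebraMap F K)))).ker =
      (map (algebraMap F K)).ker ⊔ multiples π := by
  have hle : (map (algebraMap F K)).ker ⊔ multiples π ≤
      (map (toFunctionField (F := F) (π.map (algebraMap F K)))).ker :=
    sup_le (toFunctionField_eq_comp (F := F) (π.map (algebraMap F K)) ▸
      ker_map_le_ker_map_comp _ _) (multiples_le_ker_map hπL)
  refine le_antisymm (fun x hx ↦ ?_) hle
  induction x using ind with | _ φ hφ
  induction hn : φ.dim using Nat.strong_induction_on generalizing φ with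
  | _ n ih =>
  by_cases hdim : φ.dim = 0
  · rw [mk_eq_zero_iff.2 ⟨⊥, by simp [IsTotallyIsotropic], by simp [hdim]⟩]
    exact zero_mem _
  obtain ⟨θ, hθ, hlt, hsub⟩ := exists_dim_lt_of_mem_ker hK hπ hAS hφ hdim hx
  have hθL := sub_sub_cancel (mk φ hφ) (mk θ hθ) ▸ sub_mem hx (hle hsub)
  exact sub_add_cancel (mk φ hφ) (mk θ hθ) ▸ add_mem hsub (ih θ.dim (hn ▸ hlt) θ hθ hθL rfl)

end FunctionField

end WittGroup

end Kernel

section PfisterKernel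

theorem isNonsingular_sumList {F : Type*} [Field F] {l : List (QF F)}
    (h : ∀ q ∈ l, IsNonsingular q.form) : IsNonsingular (sumList l).form := by
  induction l with
  | nil => exact fun x _ ↦ Subsingleton.elim (α := Fin 0 → F) x 0
  | cons q l ih =>
    have ⟨hq, hl⟩ := List.forall_mem_cons.1 h
    exact isNonsingular_orthSum.2 ⟨hq, ih hl⟩

theorem isPfisterLike_map_pfTensor_bin {F E : Type*} [Field F] [Field E] [CharP E 2]
    (f : F →+* E) {l : List F} (hl : ∀ a ∈ l, a ≠ 0) (b : F) :
    IsPfisterLike ((pfTensor l (bin 1 b)).map f).form := by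
  rw [map_pfTensor, map_bin, map_one]
  refine isPfisterLike_pfTensor (isPfisterLike_bin (f b)) fun x hx ↦ ?_
  obtain ⟨a, ha, rfl⟩ := List.mem_map.1 hx
  exact (map_ne_zero f).2 (hl a ha)

theorem WittGroup.mk_mem_ker_map_sup_multiples_iff {F E : Type*} [Field F] [Field E] [CharP F 2]
    [CharP E 2] {f : F →+* E} {π φ : QF F} (hπ : IsNonsingular π.form)
    {hφ : IsNonsingular φ.form} :
    mk φ hφ ∈ (map f).ker ⊔ multiples π ↔
      ∃ (ψ : QF F) (bs : List F), ψ.Nonsingular ∧ Hyperbolic (ψ.map f) ∧ (∀ c ∈ bs, c ≠ 0) ∧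
        WittEquiv φ (ψ.orthSum (sumList (bs.map fun c ↦ smul c π))) := by
  rw [AddSubgroup.mem_sup]
  constructor
  · rintro ⟨x, hx, y, hy, h⟩
    obtain ⟨bs, hbs, hsum, rfl⟩ := mem_multiples_iff.1 hy
    induction x using ind with | _ ψ hψ
    rw [← mk_orthSum (isNonsingular_orthSum.2 ⟨hψ, hsum⟩)] at h
    exact ⟨ψ, bs, nonsingular_iff.2 hψ, mk_mem_ker_map_iff.1 hx, hbs,
      mk_eq_mk_iff_wittEquiv.1 h.symm⟩
  · rintro ⟨ψ, bs, hψ, hyp, hbs, h⟩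
    rw [nonsingular_iff] at hψ
    have hsum : IsNonsingular (sumList (bs.map fun c ↦ smul c π)).form := by
      refine isNonsingular_sumList fun q hq ↦ ?_
      obtain ⟨c, hc, rfl⟩ := List.mem_map.1 hq
      exact form_smul c π ▸ hπ.smul (hbs c hc)
    exact ⟨_, (mk_mem_ker_map_iff (hq := hψ)).2 hyp, _, mem_multiples_iff.2 ⟨bs, hbs, hsum, rfl⟩,
      (mk_eq_mk_iff_wittEquiv (hq' := isNonsingular_orthSum.2 ⟨hψ, hsum⟩).2 h).symm⟩

end PfisterKernel

end QF

open QF in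
/-- Let `F` have characteristic 2, let `π = ⟨⟨a₁,…,a_{n-1}; b]]` be an
`n`-fold quadratic Pfister form over `F` (`n = m + 1 ≥ 1`), let `K/F` be purely
inseparable of exponent 1 (`K² ⊆ F`), and let `L = K(π)` be the function field over `K`
of the quadric `π = 0`.  Then `W_q(L/F) = W_q(K/F) + W(F) ⊗ π`: a nonsingular form `φ`
over `F` becomes hyperbolic over `L` iff `φ` is Witt equivalent to `ψ ⊥ (β ⊗ π)` where
`ψ` is nonsingular and hyperbolic over `K` and `β ⊗ π` is a sum `⊥ᵢ bᵢ·π`, `bᵢ ∈ F*`. -/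
theorem wittKernel_functionField_quadratic_pfister
    (F K : Type*) [Field F] [Field K] [Algebra F K] [CharP F 2]
    (hK : ∀ x : K, ∃ y : F, algebraMap F K y = x ^ 2)
    (m : ℕ) (a : Fin m → F) (ha : ∀ i, a i ≠ 0) (b : F)
    (π : QF F) (hπ : π = pfTensor (List.ofFn a) (bin 1 b))
    [IsDomain (CoordRing (π.map (algebraMap F K)))] :
    ∀ φ : QF F, φ.Nonsingular →
      (Hyperbolic (φ.map (toFunctionField (F := F) (π.map (algebraMap F K)))) ↔
        ∃ (ψ : QF F) (bs : List F), ψ.Nonsingular ∧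
          Hyperbolic (ψ.map (algebraMap F K)) ∧ (∀ c ∈ bs, c ≠ 0) ∧
          WittEquiv φ (ψ.orthSum (sumList (bs.map fun c => smul c π)))) := by
  intro φ hφ
  let πK := π.map (algebraMap F K)
  have : CharP K 2 := charP_of_injective_ringHom (algebraMap F K).injective 2
  have : CharP (FunctionField πK) 2 :=
    charP_of_injective_ringHom (toFunctionField (F := F) πK).injective 2
  have ha' : ∀ x ∈ List.ofFn a, x ≠ 0 := by simpa [List.mem_ofFn] using ha
  have hπF : IsNonsingular π.form :=
    hπ ▸ (isPfisterLike_pfTensor (isPfisterLike_bin b) ha').isNonsingular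
  obtain ⟨i₀, i₁, hAS⟩ : ∃ i₀ i₁, IsArtinSchreierAt π.c i₀ i₁ :=
    hπ ▸ exists_isArtinSchreierAt_pfTensor (List.ofFn a) b
  have hπL : IsPfisterLike (π.map (toFunctionField (F := F) πK)).form :=
    (congrArg (QF.map (toFunctionField (F := F) πK)) hπ).symm ▸
      isPfisterLike_map_pfTensor_bin (toFunctionField (F := F) πK) ha' b
  have hLag := hπL.hasLagrangian
    (not_anisotropic_functionField (q := πK) (hAS.map (algebraMap F K)))
  rw [← WittGroup.mk_mem_ker_map_iff (hq := nonsingular_iff.1 hφ),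
    WittGroup.ker_map_toFunctionField hK hπF hAS hLag,
    WittGroup.mk_mem_ker_map_sup_multiples_iff hπF]
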